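/- For every t > 0, the random vector (K(t) − B(t), X(t)) (where X = 2K − B) has joint probability density on ℝ² given by f(y, z) = 4 y z (z − y) t^{−5/2} φ(z/√t) · 1_{0 < y < z}. In particular, the conditional density of K(t) − B(t) given X(t) = z is y ↦ 6y(z − y)/z³ on (0, z), which does not depend on t. -/

import Mathlib

open MeasureTheory ProbabilityTheory Set Filter Topology
open scoped Classical

noncomputable section

/-- The σ-algebra generated by a process `Y` up to time `t` (over times in `[0, t]`),
i.e. `σ(Y u : 0 ≤ u ≤ t)`. -/
def natSigma {Ω E : Type*} [MeasurableSpace E] (Y : ℝ → Ω → E) (t : ℝ) :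
    MeasurableSpace Ω :=
  ⨆ u : Set.Icc (0 : ℝ) t, MeasurableSpace.comap (Y u) inferInstance

/-- The σ-algebra generated by the whole (nonnegative-time) process `Y`. -/
def procSigma {Ω E : Type*} [MeasurableSpace E] (Y : ℝ → Ω → E) :
    MeasurableSpace Ω :=
  ⨆ u : Set.Ici (0 : ℝ), MeasurableSpace.comap (Y u) inferInstance

/-- `B` is a standard one-dimensional Brownian motion (with `B 0 = 0`) under `P`:
measurable, a.s. starting at `0` and continuous on `[0, ∞)`, with Gaussian increments
`B t - B s ~ N(0, t - s)` that are independent of the past. -/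
structure IsBrownianMotion {Ω : Type*} [MeasurableSpace Ω] (P : Measure Ω)
    (B : ℝ → Ω → ℝ) : Prop where
  measurable : ∀ t : ℝ, Measurable (B t)
  init : ∀ᵐ ω ∂P, B 0 ω = 0
  cont : ∀ᵐ ω ∂P, ContinuousOn (fun t => B t ω) (Set.Ici 0)
  incr_law : ∀ s t : ℝ, 0 ≤ s → s ≤ t →
    P.map (fun ω => B t ω - B s ω) = gaussianReal 0 (Real.toNNReal (t - s))
  incr_indep : ∀ s t : ℝ, 0 ≤ s → s ≤ t →
    Indep (MeasurableSpace.comap (fun ω => B t ω - B s ω) inferInstance)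
      (natSigma B s) P

/-- `W` is a standard `n`-dimensional Brownian motion started at the origin:
its coordinate processes are independent standard one-dimensional Brownian motions. -/
def IsBrownianMotionND {Ω : Type*} [MeasurableSpace Ω] (P : Measure Ω) {n : ℕ}
    (W : ℝ → Ω → EuclideanSpace ℝ (Fin n)) : Prop :=
  (∀ i : Fin n, IsBrownianMotion P (fun t ω => W t ω i)) ∧
  iIndep (fun i : Fin n => procSigma (fun t ω => W t ω i)) P

/-- The least concave majorant on `[0, ∞)` of a function `f : ℝ → ℝ`:
`t ↦ inf { c t | c concave on [0,∞) and c ≥ f on [0,∞) }`. -/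
def concaveMajorant (f : ℝ → ℝ) (t : ℝ) : ℝ :=
  sInf {y | ∃ c : ℝ → ℝ, ConcaveOn ℝ (Set.Ici 0) c ∧ (∀ u, 0 ≤ u → f u ≤ c u) ∧ y = c t}

/-- Right-hand derivative. -/
def rightDeriv (f : ℝ → ℝ) (t : ℝ) : ℝ := derivWithin f (Set.Ioi t) t

/-- `D(t)`: the first vertex (contact point of the concave majorant) at or after time `t`. -/
def firstVertex (f : ℝ → ℝ) (t : ℝ) : ℝ :=
  sInf {u | t ≤ u ∧ concaveMajorant f u = f u}

/-- The concave majorant process `K` of `B`. -/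
def Kproc {Ω : Type*} (B : ℝ → Ω → ℝ) (t : ℝ) (ω : Ω) : ℝ :=
  concaveMajorant (fun u => B u ω) t

/-- The process `X = 2K - B`. -/
def Xproc {Ω : Type*} (B : ℝ → Ω → ℝ) (t : ℝ) (ω : Ω) : ℝ :=
  2 * Kproc B t ω - B t ω

/-- The right-hand slope process `K'` of the concave majorant. -/
def Kslope {Ω : Type*} (B : ℝ → Ω → ℝ) (t : ℝ) (ω : Ω) : ℝ :=
  rightDeriv (fun u => Kproc B u ω) t

/-- The process `D` of first vertices: `D(t) = inf {u ≥ t : K u = B u}`. -/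
def Dproc {Ω : Type*} (B : ℝ → Ω → ℝ) (t : ℝ) (ω : Ω) : ℝ :=
  firstVertex (fun u => B u ω) t

/-- A process `Y` is Markov (w.r.t. its natural filtration): for all `0 ≤ s ≤ t`,
`σ(Y t)` is conditionally independent of `σ(Y u : 0 ≤ u ≤ s)` given `σ(Y s)`. -/
def IsMarkov {Ω E : Type*} [mΩ : MeasurableSpace Ω] [StandardBorelSpace Ω]
    [MeasurableSpace E] (P : Measure Ω) [IsFiniteMeasure P] (Y : ℝ → Ω → E) : Prop :=
  ∀ s t : ℝ, 0 ≤ s → s ≤ t →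
    ∃ hs : MeasurableSpace.comap (Y s) inferInstance ≤ mΩ,
      CondIndep (MeasurableSpace.comap (Y s) inferInstance)
        (MeasurableSpace.comap (Y t) inferInstance)
        (natSigma Y s) hs P

/-- The standard normal density `φ`. -/
def stdGaussianPDF (x : ℝ) : ℝ := (Real.sqrt (2 * Real.pi))⁻¹ * Real.exp (-(x ^ 2) / 2)

/-- The claimed joint density of `(K(t) - B(t), X(t))`:
`f(y, z) = 4 y z (z - y) t^(-5/2) φ(z/√t) 1_{0 < y < z}`. -/
def jointDensKBX (t y z : ℝ) : ℝ :=
  if 0 < y ∧ y < z then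
    4 * y * z * (z - y) * t ^ (-(5 : ℝ) / 2) * stdGaussianPDF (z / Real.sqrt t)
  else 0


open scoped NNReal ENNReal

/-! ### Brownian motion in the sense of Mathlib -/

lemma measurable_natSigma {Ω : Type*} (B : ℝ → Ω → ℝ) {u s : ℝ} (hu : 0 ≤ u) (hus : u ≤ s) :
    Measurable[natSigma B s] (B u) := by
  have h : MeasurableSpace.comap (B u) inferInstance ≤ natSigma B s :=
    le_iSup (fun u : Set.Icc (0 : ℝ) s => MeasurableSpace.comap (B u) inferInstance) ⟨u, hu, hus⟩
  exact measurable_iff_comap_le.2 h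

lemma bm_hasIndepIncrements {Ω : Type*} [MeasurableSpace Ω] {P : Measure Ω}
    [IsProbabilityMeasure P] {B : ℝ → Ω → ℝ} (hB : IsBrownianMotion P B) :
    HasIndepIncrements (fun s : ℝ≥0 => B s) P := by
  refine HasIndepIncrements.of_nat fun τ hτ _ => ?_
  rw [iIndepFun_iff_measure_inter_preimage_eq_mul]
  intro S
  induction S using Finset.induction_on_max with
  | empty => intro sets _; simp
  | insert a S hS ih =>
    intro sets hsets
    have haS : a ∉ S := fun h => lt_irrefl _ (hS a h)
    rw [Finset.set_biInter_insert, Finset.prod_insert haS]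
    rw [← ih (fun i hi => hsets i (Finset.mem_insert_of_mem hi))]
    have hind := hB.incr_indep (τ a) (τ (a + 1)) (τ a).2 (by exact_mod_cast hτ (Nat.le_succ a))
    rw [Indep_iff] at hind
    refine hind _ _ ⟨sets a, hsets a (Finset.mem_insert_self _ _), rfl⟩ ?_
    refine Finset.measurableSet_biInter _ fun i hi => ?_
    have hia : i + 1 ≤ a := hS i hi
    have h1 : Measurable[natSigma B (τ a)] (B (τ (i + 1))) :=
      measurable_natSigma B (τ (i+1)).2 (by exact_mod_cast hτ hia)
    have h2 : Measurable[natSigma B (τ a)] (B (τ i)) :=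
      measurable_natSigma B (τ i).2 (by exact_mod_cast hτ (by omega))
    exact (Measurable.sub h1 h2) (hsets i (Finset.mem_insert_of_mem hi))

lemma bm_pre {Ω : Type*} [MeasurableSpace Ω] {P : Measure Ω}
    [IsProbabilityMeasure P] {B : ℝ → Ω → ℝ} (hB : IsBrownianMotion P B) :
    IsPreBrownianReal (fun s : ℝ≥0 => B s) P := by
  refine HasIndepIncrements.isPreBrownianReal_of_hasLaw (fun t => ?_) (bm_hasIndepIncrements hB)
  refine ⟨(hB.measurable _).aemeasurable, ?_⟩
  have h := hB.incr_law 0 t le_rfl t.2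
  simp only [sub_zero, Real.toNNReal_coe] at h
  rw [← h]
  refine Measure.map_congr ?_
  filter_upwards [hB.init] with ω hω
  simp [hω]

/-- The time-inverted bridge to the past of time `t`. -/
def pastProc {Ω : Type*} (W : ℝ≥0 → Ω → ℝ) (t : ℝ≥0) (s : ℝ≥0) (ω : Ω) : ℝ :=
  (1 + s / t) * W (t ^ 2 / (t + s)) ω - W t ω

lemma pastProc_pre {Ω : Type*} [MeasurableSpace Ω] {P : Measure Ω}
    {W : ℝ≥0 → Ω → ℝ} (hW : IsPreBrownianReal W P) {t : ℝ≥0} (ht : 0 < t) :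
    IsPreBrownianReal (pastProc W t) P := by
  have := hW.isGaussianProcess.isProbabilityMeasure
  have hL : ∀ s, MemLp (W s) 2 P := fun s =>
    (hW.isGaussianProcess.hasGaussianLaw_eval _).memLp_two
  have ht' : (0 : ℝ) < t := ht
  refine IsGaussianProcess.isPreBrownianReal_of_covariance ?_ (fun s => ?_) (fun s s' hs => ?_)
  · refine hW.isGaussianProcess.of_isGaussianProcess fun s => ⟨{t ^ 2 / (t + s), t},
      { toFun x := (1 + s / t : ℝ) * x ⟨t ^ 2 / (t + s), by simp⟩ - x ⟨t, by simp⟩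
        map_add' x y := by simp; ring
        map_smul' c x := by simp; ring
        cont := by fun_prop }, by intro ω; simp [pastProc]⟩
  · unfold pastProc
    rw [integral_sub, integral_const_mul, hW.integral_eval, hW.integral_eval]
    · simp
    · exact (hW.integrable_eval _).const_mul _
    · exact hW.integrable_eval _
  · unfold pastProc
    have hV : MemLp (fun ω => (1 + (s' : ℝ) / t) * W (t ^ 2 / (t + s')) ω - W t ω) 2 P :=
      ((hL _).const_mul _).sub (hL _)
    rw [covariance_fun_sub_left ((hL _).const_mul _) (hL _) hV,
      covariance_fun_sub_right ((hL _).const_mul _) ((hL _).const_mul _) (hL _),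
      covariance_fun_sub_right (hL _) ((hL _).const_mul _) (hL _)]
    simp only [covariance_const_mul_left, covariance_const_mul_right, hW.covariance_fun_eval]
    have e1 : min (t ^ 2 / (t + s)) (t ^ 2 / (t + s')) = t ^ 2 / (t + s') := by
      apply min_eq_right; gcongr
    have e2 : ∀ r : ℝ≥0, t ^ 2 / (t + r) ≤ t := fun r => by
      rw [div_le_iff₀ (by positivity), sq]; gcongr; exact le_self_add
    rw [e1, min_eq_left (e2 _), min_eq_right (e2 _), min_self]
    push_cast
    have h3 : (0 : ℝ) < t + s' := by positivity
    have h4 : (0 : ℝ) < t + s := by positivity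
    field_simp
    ring

lemma pastProc_indep {Ω : Type*} [MeasurableSpace Ω] {P : Measure Ω}
    {W : ℝ≥0 → Ω → ℝ} (hW : IsPreBrownianReal W P) {t : ℝ≥0} (ht : 0 < t) :
    IndepFun (fun ω s => pastProc W t s ω) (W t) P := by
  have := hW.isGaussianProcess.isProbabilityMeasure
  have hL : ∀ s, MemLp (W s) 2 P := fun s =>
    (hW.isGaussianProcess.hasGaussianLaw_eval _).memLp_two
  have hm : ∀ s, AEMeasurable (W s) P := hW.aemeasurable
  have key : IndepFun (fun ω s => pastProc W t s ω) (fun ω (_ : Unit) => W t ω) P := by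
    apply IsGaussianProcess.indepFun_of_covariance_eq_zero
    · apply hW.isGaussianProcess.of_isGaussianProcess
      rintro (s | _)
      · exact ⟨{t ^ 2 / (t + s), t},
          { toFun x := (1 + s / t : ℝ) * x ⟨t ^ 2 / (t + s), by simp⟩ - x ⟨t, by simp⟩
            map_add' x y := by simp; ring
            map_smul' c x := by simp; ring
            cont := by fun_prop }, by intro ω; simp [pastProc]⟩
      · exact ⟨{t},
          { toFun x := x ⟨t, by simp⟩
            map_add' x y := by simp
            map_smul' c x := by simp }, by simp⟩
    · intro s; exact ((hm _).const_mul _).sub (hm _)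
    · intro _; exact hm _
    · intro s _
      change cov[fun ω => pastProc W t s ω, W t; P] = 0
      unfold pastProc
      rw [covariance_fun_sub_left ((hL _).const_mul _) (hL _) (hL _), covariance_const_mul_left,
        hW.covariance_eval, hW.covariance_eval]
      have e2 : ∀ r : ℝ≥0, t ^ 2 / (t + r) ≤ t := fun r => by
        rw [div_le_iff₀ (by positivity), sq]; gcongr; exact le_self_add
      rw [min_eq_left (e2 _), min_self]
      have ht' : (0 : ℝ) < t := ht
      have h4 : (0 : ℝ) < t + s := by positivity
      push_cast
      field_simp
      ring
  have h1 : Measurable (fun f : Unit → ℝ => f ()) := measurable_pi_apply _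
  exact key.comp measurable_id h1


/-! ### Brownian motion and lines -/

section line
variable {Ω : Type*} [MeasurableSpace Ω] {P : Measure Ω} {X : ℝ≥0 → Ω → ℝ}

lemma lintegral_exp_of_law {Z : Ω → ℝ} {v : ℝ≥0} (hZ : HasLaw Z (gaussianReal 0 v) P) (c : ℝ) :
    ∫⁻ ω, ENNReal.ofReal (Real.exp (c * Z ω)) ∂P = ENNReal.ofReal (Real.exp (v * c ^ 2 / 2)) := by
  have h1 : ∫⁻ x, ENNReal.ofReal (Real.exp (c * x)) ∂(gaussianReal 0 v)
      = ENNReal.ofReal (Real.exp (v * c ^ 2 / 2)) := by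
    rw [← ofReal_integral_eq_lintegral_ofReal (integrable_exp_mul_gaussianReal c)
      (ae_of_all _ fun x => (Real.exp_pos _).le)]
    congr 1
    have := congrFun (mgf_fun_id_gaussianReal (μ := 0) (v := v)) c
    simpa [mgf] using this
  rw [← h1, ← hZ.map_eq, lintegral_map' (by fun_prop) hZ.aemeasurable]

/-- The exponential martingale. -/
def expM (X : ℝ≥0 → Ω → ℝ) (l : ℝ) (s : ℝ≥0) (ω : Ω) : ℝ≥0∞ :=
  ENNReal.ofReal (Real.exp (2 * l * (X s ω - l * s)))

/-- The σ-algebra of the past. -/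
def pastSigma (X : ℝ≥0 → Ω → ℝ) (s : ℝ≥0) : MeasurableSpace Ω :=
  MeasurableSpace.comap (fun ω (u : Set.Iic s) => X u ω) inferInstance

lemma measurable_pastSigma (X : ℝ≥0 → Ω → ℝ) {u s : ℝ≥0} (hu : u ≤ s) :
    Measurable[pastSigma X s] (X u) := by
  have h1 : Measurable (fun f : Set.Iic s → ℝ => f ⟨u, hu⟩) := measurable_pi_apply _
  intro A hA
  exact ⟨_, h1 hA, rfl⟩

lemma measurable_expM (hm : ∀ s, Measurable (X s)) (l : ℝ) (s : ℝ≥0) : Measurable (expM X l s) := by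
  unfold expM
  have := hm s
  fun_prop

lemma expM_mart (hX : IsPreBrownianReal X P) (hm : ∀ s, Measurable (X s)) (l : ℝ) {s T : ℝ≥0}
    (hsT : s ≤ T) {C : Set Ω} (hC : MeasurableSet[pastSigma X s] C) :
    ∫⁻ ω in C, expM X l T ω ∂P = ∫⁻ ω in C, expM X l s ω ∂P := by
  obtain ⟨r, rfl⟩ := exists_add_of_le hsT
  obtain ⟨D, hD, rfl⟩ := hC
  have hpm : Measurable (fun ω (u : Set.Iic s) => X u ω) := measurable_pi_lambda _ fun u => hm u
  have hCm : MeasurableSet ((fun ω (u : Set.Iic s) => X u ω) ⁻¹' D) := hpm hD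
  rw [← lintegral_indicator hCm, ← lintegral_indicator hCm]
  let g : (Set.Iic s → ℝ) → ℝ≥0∞ :=
    D.indicator fun f => ENNReal.ofReal (Real.exp (2 * l * (f ⟨s, Set.mem_Iic.2 le_rfl⟩ - l * s)))
  let h : (ℝ≥0 → ℝ) → ℝ≥0∞ := fun f => ENNReal.ofReal (Real.exp (2 * l * (f r - l * r)))
  have hg : Measurable g := by
    refine Measurable.indicator ?_ hD
    have : Measurable (fun f : Set.Iic s → ℝ => f ⟨s, Set.mem_Iic.2 le_rfl⟩) := measurable_pi_apply _
    fun_prop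
  have hh : Measurable h := by
    have : Measurable (fun f : ℝ≥0 → ℝ => f r) := measurable_pi_apply _
    fun_prop
  have hind := (hX.indepFun_shift s).symm.comp hg hh
  have hsm : Measurable (fun ω (t : ℝ≥0) => X (s + t) ω - X s ω) :=
    measurable_pi_lambda _ fun u => (hm _).sub (hm _)
  have hone : ∫⁻ ω, (h ∘ fun ω (t : ℝ≥0) => X (s + t) ω - X s ω) ω ∂P = 1 := by
    have h1 := lintegral_exp_of_law ((hX.shift s).hasLaw_eval r) (2 * l)
    have h2 : ∀ ω, (h ∘ fun ω (t : ℝ≥0) => X (s + t) ω - X s ω) ω =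
        ENNReal.ofReal (Real.exp (2 * l * (X (s + r) ω - X s ω))) *
          ENNReal.ofReal (Real.exp (- (2 * l ^ 2 * r))) := by
      intro ω
      rw [← ENNReal.ofReal_mul (Real.exp_pos _).le, ← Real.exp_add]
      simp only [h, Function.comp]
      congr 2
      ring
    simp_rw [h2]
    have := hm
    rw [lintegral_mul_const _ (by fun_prop), h1, ← ENNReal.ofReal_mul (Real.exp_pos _).le,
      ← Real.exp_add]
    ring_nf
    simp
  have hprod := lintegral_mul_eq_lintegral_mul_lintegral_of_indepFun (hg.comp hpm) (hh.comp hsm)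
    hind
  rw [hone, mul_one] at hprod
  refine Eq.trans ?_ (hprod.trans ?_)
  · refine lintegral_congr fun ω => ?_
    by_cases hω : ω ∈ (fun ω (u : Set.Iic s) => X u ω) ⁻¹' D
    · have hω' : (fun u : Set.Iic s => X u ω) ∈ D := hω
      rw [indicator_of_mem hω]
      simp only [Pi.mul_apply, Function.comp, g, h, indicator_of_mem hω', expM]
      rw [← ENNReal.ofReal_mul (Real.exp_pos _).le, ← Real.exp_add]
      congr 2
      push_cast
      ring
    · have hω' : (fun u : Set.Iic s => X u ω) ∉ D := hω
      rw [indicator_of_notMem hω]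
      simp only [Pi.mul_apply, Function.comp, g, indicator_of_notMem hω', zero_mul]
  · refine lintegral_congr fun ω => ?_
    by_cases hω : ω ∈ (fun ω (u : Set.Iic s) => X u ω) ⁻¹' D
    · have hω' : (fun u : Set.Iic s => X u ω) ∈ D := hω
      rw [indicator_of_mem hω]
      simp only [Function.comp, g, indicator_of_mem hω', expM]
    · have hω' : (fun u : Set.Iic s => X u ω) ∉ D := hω
      rw [indicator_of_notMem hω]
      simp only [Function.comp, g, indicator_of_notMem hω']

/-- The tilted measure. -/
def tiltQ (P : Measure Ω) (X : ℝ≥0 → Ω → ℝ) (l : ℝ) (T : ℝ≥0) : Measure Ω :=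
  P.withDensity (expM X l T)

lemma pastSigma_le (hm : ∀ s, Measurable (X s)) (s : ℝ≥0) :
    pastSigma X s ≤ (inferInstance : MeasurableSpace Ω) :=
  measurable_iff_comap_le.1 (measurable_pi_lambda _ fun u : Set.Iic s => hm u)

lemma tiltQ_ge (hX : IsPreBrownianReal X P) (hm : ∀ s, Measurable (X s)) {l y : ℝ} (hl : 0 < l)
    {s T : ℝ≥0} (hsT : s ≤ T) {C : Set Ω} (hC : MeasurableSet[pastSigma X s] C)
    (h : ∀ ω ∈ C, y < X s ω - l * s) :
    ENNReal.ofReal (Real.exp (2 * l * y)) * P C ≤ tiltQ P X l T C := by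
  have hC' := pastSigma_le hm s _ hC
  rw [tiltQ, withDensity_apply _ hC', expM_mart hX hm l hsT hC, ← setLIntegral_const]
  refine setLIntegral_mono' hC' fun ω hω => ?_
  unfold expM
  gcongr
  exact (h ω hω).le

lemma tiltQ_le (hX : IsPreBrownianReal X P) (hm : ∀ s, Measurable (X s)) {l y : ℝ} (hl : 0 < l)
    {s T : ℝ≥0} (hsT : s ≤ T) {C : Set Ω} (hC : MeasurableSet[pastSigma X s] C)
    (h : ∀ ω ∈ C, X s ω - l * s ≤ y) :
    tiltQ P X l T C ≤ ENNReal.ofReal (Real.exp (2 * l * y)) * P C := by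
  have hC' := pastSigma_le hm s _ hC
  rw [tiltQ, withDensity_apply _ hC', expM_mart hX hm l hsT hC, ← setLIntegral_const]
  refine setLIntegral_mono' hC' fun ω hω => ?_
  unfold expM
  gcongr
  exact h ω hω

lemma tiltQ_prob (hX : IsPreBrownianReal X P) (l : ℝ) (T : ℝ≥0) :
    IsProbabilityMeasure (tiltQ P X l T) := by
  constructor
  rw [tiltQ, withDensity_apply _ MeasurableSet.univ, Measure.restrict_univ]
  have h1 := lintegral_exp_of_law (hX.hasLaw_eval T) (2 * l)
  have h2 : ∀ ω, expM X l T ω = ENNReal.ofReal (Real.exp (2 * l * X T ω)) *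
          ENNReal.ofReal (Real.exp (- (2 * l ^ 2 * T))) := by
      intro ω
      rw [← ENNReal.ofReal_mul (Real.exp_pos _).le, ← Real.exp_add]
      simp only [expM]
      congr 2
      ring
  simp_rw [h2]
  rw [lintegral_mul_const' _ _ ENNReal.ofReal_ne_top, h1, ← ENNReal.ofReal_mul (Real.exp_pos _).le,
      ← Real.exp_add]
  ring_nf
  simp

/-- Crossing along a grid. -/
def gridA (X : ℝ≥0 → Ω → ℝ) (l y : ℝ) (τ : ℕ → ℝ≥0) (N : ℕ) : Set Ω :=
  {ω | ∃ k, k ≤ N ∧ y < X (τ k) ω - l * τ k}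

/-- Large increments along a grid. -/
def gridO (X : ℝ≥0 → Ω → ℝ) (l y ε : ℝ) (τ : ℕ → ℝ≥0) (N : ℕ) : Set Ω :=
  {ω | y < X (τ 0) ω - l * τ 0 ∨
    ∃ k, k < N ∧ ε < (X (τ (k + 1)) ω - l * τ (k + 1)) - (X (τ k) ω - l * τ k)}

lemma gridA_meas (l y : ℝ) {τ : ℕ → ℝ≥0} (hτ : Monotone τ) (N : ℕ) :
    MeasurableSet[pastSigma X (τ N)] (gridA X l y τ N) := by
  have : gridA X l y τ N = ⋃ k : Fin (N + 1), {ω | y < X (τ k) ω - l * τ k} := by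
    ext ω
    simp only [gridA, mem_ofPred_eq, mem_iUnion]
    exact ⟨fun ⟨k, hk, h⟩ => ⟨⟨k, by omega⟩, h⟩, fun ⟨k, h⟩ => ⟨k, by omega, h⟩⟩
  rw [this]
  refine MeasurableSet.iUnion fun k => ?_
  have hk : Measurable[pastSigma X (τ N)] (X (τ k)) := measurable_pastSigma X (hτ (by omega))
  exact measurableSet_lt measurable_const (hk.sub measurable_const)

lemma gridO_meas (hm : ∀ s, Measurable (X s)) (l y ε : ℝ) (τ : ℕ → ℝ≥0) (N : ℕ) :
    MeasurableSet (gridO X l y ε τ N) := by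
  have : gridO X l y ε τ N = {ω | y < X (τ 0) ω - l * τ 0} ∪ ⋃ k : Fin N,
      {ω | ε < (X (τ (k + 1)) ω - l * τ (k + 1)) - (X (τ k) ω - l * τ k)} := by
    ext ω
    simp only [gridO, mem_ofPred_eq, mem_union, mem_iUnion]
    refine or_congr Iff.rfl ?_
    exact ⟨fun ⟨k, hk, h⟩ => ⟨⟨k, by omega⟩, h⟩, fun ⟨k, h⟩ => ⟨k, by omega, h⟩⟩
  rw [this]
  refine MeasurableSet.union ?_ (MeasurableSet.iUnion fun k => ?_)
  · have := hm (τ 0)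
    exact measurableSet_lt measurable_const (by fun_prop)
  · have h1 := hm (τ k)
    have h2 := hm (τ (k + 1))
    exact measurableSet_lt measurable_const (by fun_prop)

lemma grid_succ (l y : ℝ) (τ : ℕ → ℝ≥0) (N : ℕ) :
    gridA X l y τ (N + 1) = gridA X l y τ N ∪
      ((gridA X l y τ N)ᶜ ∩ {ω | y < X (τ (N + 1)) ω - l * τ (N + 1)}) := by
  ext ω
  constructor
  · rintro ⟨k, hk, h⟩
    by_cases hA : ω ∈ gridA X l y τ N
    · exact Or.inl hA
    · refine Or.inr ⟨hA, ?_⟩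
      rcases Nat.lt_or_ge k (N + 1) with h1 | h1
      · exact absurd ⟨k, by omega, h⟩ hA
      · obtain rfl : k = N + 1 := by omega
        exact h
  · rintro (⟨k, hk, h⟩ | ⟨_, h⟩)
    · exact ⟨k, by omega, h⟩
    · exact ⟨N + 1, le_rfl, h⟩

lemma grid_C_meas (l y : ℝ) {τ : ℕ → ℝ≥0} (hτ : Monotone τ) (N : ℕ) :
    MeasurableSet[pastSigma X (τ (N + 1))]
      ((gridA X l y τ N)ᶜ ∩ {ω | y < X (τ (N + 1)) ω - l * τ (N + 1)}) := by
  have h : Measurable[pastSigma X (τ (N + 1))] (X (τ (N + 1))) := measurable_pastSigma X le_rfl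
  have h1 : MeasurableSet[pastSigma X (τ (N + 1))] (gridA X l y τ N) := by
    have : gridA X l y τ N = ⋃ k : Fin (N + 1), {ω | y < X (τ k) ω - l * τ k} := by
      ext ω
      simp only [gridA, mem_ofPred_eq, mem_iUnion]
      exact ⟨fun ⟨k, hk, h⟩ => ⟨⟨k, by omega⟩, h⟩, fun ⟨k, h⟩ => ⟨k, by omega, h⟩⟩
    rw [this]
    refine MeasurableSet.iUnion fun k => ?_
    have hk : Measurable[pastSigma X (τ (N + 1))] (X (τ k)) :=
      measurable_pastSigma X (hτ (by omega))
    exact measurableSet_lt measurable_const (hk.sub measurable_const)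
  exact h1.compl.inter (measurableSet_lt measurable_const (h.sub measurable_const))

lemma grid_lower (hX : IsPreBrownianReal X P) (hm : ∀ s, Measurable (X s)) {l y : ℝ} (hl : 0 < l)
    {τ : ℕ → ℝ≥0} (hτ : Monotone τ) {T : ℝ≥0} (N : ℕ) (hT : τ N ≤ T) :
    ENNReal.ofReal (Real.exp (2 * l * y)) * P (gridA X l y τ N) ≤
      tiltQ P X l T (gridA X l y τ N) := by
  induction N with
  | zero =>
    refine tiltQ_ge hX hm hl hT (gridA_meas l y hτ 0) ?_
    rintro ω ⟨k, hk, h⟩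
    obtain rfl : k = 0 := by omega
    exact h
  | succ N ih =>
    have hC := grid_C_meas (X := X) l y hτ N
    have hC' := pastSigma_le hm _ _ hC
    have hd : Disjoint (gridA X l y τ N)
      ((gridA X l y τ N)ᶜ ∩ {ω | y < X (τ (N + 1)) ω - l * τ (N + 1)}) :=
      disjoint_compl_right.mono_right inter_subset_left
    rw [grid_succ, measure_union hd hC', measure_union hd hC', mul_add]
    refine add_le_add (ih ((hτ (Nat.le_succ N)).trans hT)) ?_
    exact tiltQ_ge hX hm hl hT hC fun ω hω => hω.2

lemma grid_upper_aux (hX : IsPreBrownianReal X P) (hm : ∀ s, Measurable (X s)) {l y ε : ℝ}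
    (hl : 0 < l) {τ : ℕ → ℝ≥0} (hτ : Monotone τ) {T : ℝ≥0} (N : ℕ) (hT : τ N ≤ T) :
    tiltQ P X l T (gridA X l y τ N \ gridO X l y ε τ N) ≤
    ENNReal.ofReal (Real.exp (2 * l * (y + ε))) * P (gridA X l y τ N) := by
  induction N with
  | zero =>
    have : gridA X l y τ 0 \ gridO X l y ε τ 0 = ∅ := by
      ext ω
      simp only [Set.mem_sdiff, mem_empty_iff_false, iff_false, not_and, not_not]
      rintro ⟨k, hk, h⟩
      obtain rfl : k = 0 := by omega
      exact Or.inl h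
    simp [this]
  | succ N ih =>
    have hC := grid_C_meas (X := X) l y hτ N
    have hC' := pastSigma_le hm _ _ hC
    have hd : Disjoint (gridA X l y τ N)
      ((gridA X l y τ N)ᶜ ∩ {ω | y < X (τ (N + 1)) ω - l * τ (N + 1)}) :=
      disjoint_compl_right.mono_right inter_subset_left
    have hsub : gridA X l y τ (N + 1) \ gridO X l y ε τ (N + 1) ⊆
        (gridA X l y τ N \ gridO X l y ε τ N) ∪
        (((gridA X l y τ N)ᶜ ∩ {ω | y < X (τ (N + 1)) ω - l * τ (N + 1)}) ∩
          {ω | X (τ (N + 1)) ω - l * τ (N + 1) ≤ y + ε}) := by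
      rintro ω ⟨h1, h2⟩
      rw [grid_succ] at h1
      rcases h1 with h1 | h1
      · refine Or.inl ⟨h1, fun h3 => h2 ?_⟩
        rcases h3 with h3 | ⟨k, hk, h3⟩
        · exact Or.inl h3
        · exact Or.inr ⟨k, by omega, h3⟩
      · refine Or.inr ⟨h1, ?_⟩
        by_contra h4
        simp only [mem_ofPred_eq, not_le] at h4
        refine h2 (Or.inr ⟨N, by omega, ?_⟩)
        have h5 : X (τ N) ω - l * τ N ≤ y := by
          by_contra h6
          exact h1.1 ⟨N, le_rfl, not_le.1 h6⟩
        linarith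
    have hC2 : MeasurableSet[pastSigma X (τ (N + 1))]
        {ω | X (τ (N + 1)) ω - l * τ (N + 1) ≤ y + ε} := by
      have h : Measurable[pastSigma X (τ (N + 1))] (X (τ (N + 1))) := measurable_pastSigma X le_rfl
      exact measurableSet_le (h.sub measurable_const) measurable_const
    calc _ ≤ _ := measure_mono hsub
      _ ≤ _ := measure_union_le _ _
      _ ≤ ENNReal.ofReal (Real.exp (2 * l * (y + ε))) * P (gridA X l y τ N) +
          ENNReal.ofReal (Real.exp (2 * l * (y + ε))) *
            P ((gridA X l y τ N)ᶜ ∩ {ω | y < X (τ (N + 1)) ω - l * τ (N + 1)}) := by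
          refine add_le_add (ih ((hτ (Nat.le_succ N)).trans hT)) ?_
          refine (tiltQ_le hX hm hl hT (MeasurableSet.inter hC hC2) (y := y + ε)
            fun ω hω => hω.2).trans ?_
          exact mul_le_mul' le_rfl (measure_mono inter_subset_left)
      _ = _ := by rw [grid_succ, measure_union hd hC']; exact (mul_add _ _ _).symm

lemma grid_upper (hX : IsPreBrownianReal X P) (hm : ∀ s, Measurable (X s)) {l y ε : ℝ}
    (hl : 0 < l) {τ : ℕ → ℝ≥0} (hτ : Monotone τ) {T : ℝ≥0} (N : ℕ) (hT : τ N ≤ T) :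
    tiltQ P X l T (gridA X l y τ N) ≤
    ENNReal.ofReal (Real.exp (2 * l * (y + ε))) * P (gridA X l y τ N) +
      tiltQ P X l T (gridO X l y ε τ N) := by
  have h1 : gridA X l y τ N ⊆ (gridA X l y τ N \ gridO X l y ε τ N) ∪ gridO X l y ε τ N := by
    intro ω hω
    by_cases h : ω ∈ gridO X l y ε τ N
    · exact Or.inr h
    · exact Or.inl ⟨hω, h⟩
  exact (measure_mono h1).trans ((measure_union_le _ _).trans
    (add_le_add_left (grid_upper_aux hX hm hl hτ N hT) _))

end line


section lineB

variable {Ω : Type*} [MeasurableSpace Ω] {P : Measure Ω} {X : ℝ≥0 → Ω → ℝ}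

/-- Uniform grid. -/
def gr (m k : ℕ) : ℝ≥0 := (k : ℝ≥0) / ((m : ℝ≥0) + 1)

lemma gr_mono (m : ℕ) : Monotone (gr m) := by
  intro a b hab
  unfold gr
  gcongr

lemma gr_le (m n : ℕ) {k : ℕ} (hk : k ≤ n * (m + 1)) : gr m k ≤ n := by
  unfold gr
  rw [div_le_iff₀ (by positivity)]
  exact_mod_cast hk

lemma gr_floor (u : ℝ≥0) : Tendsto (fun m : ℕ => gr m ⌊u * ((m : ℝ≥0) + 1)⌋₊) atTop (𝓝 u) := by
  have h2 : Tendsto (fun x : ℝ => (⌊(u : ℝ) * x⌋₊ : ℝ) / x) atTop (𝓝 (u : ℝ)) :=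
    tendsto_nat_floor_mul_div_atTop u.2
  have h3 : Tendsto (fun m : ℕ => (m : ℝ) + 1) atTop atTop :=
    tendsto_atTop_add_const_right _ _ tendsto_natCast_atTop_atTop
  rw [← NNReal.tendsto_coe]
  refine (h2.comp h3).congr fun m => ?_
  simp only [Function.comp, gr, NNReal.coe_div, NNReal.coe_natCast, NNReal.coe_add, NNReal.coe_one]
  congr 2

lemma floor_le_nat (u : ℝ≥0) (n m : ℕ) (hu : u ≤ n) : ⌊u * ((m : ℝ≥0) + 1)⌋₊ ≤ n * (m + 1) := by
  apply Nat.floor_le_of_le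
  push_cast
  gcongr

/-- Crossing before time `n`. -/
def crossA (X : ℝ≥0 → Ω → ℝ) (l y : ℝ) (n : ℕ) : Set Ω :=
  ⋃ m : ℕ, gridA X l y (gr m) (n * (m + 1))

lemma crossA_meas (hm : ∀ s, Measurable (X s)) (l y : ℝ) (n : ℕ) :
    MeasurableSet (crossA X l y n) :=
  MeasurableSet.iUnion fun m => pastSigma_le hm _ _ (gridA_meas l y (gr_mono m) _)

lemma crossA_ev {ω : Ω} (hc : Continuous fun s => X s ω) {l y : ℝ} {n : ℕ} {u : ℝ≥0}
    (hu : u ≤ n) (h : y < X u ω - l * u) :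
    ∀ᶠ m : ℕ in atTop, ω ∈ gridA X l y (gr m) (n * (m + 1)) := by
  have h1 : Continuous fun s : ℝ≥0 => X s ω - l * s := by fun_prop
  have h2 := (h1.tendsto u).comp (gr_floor u)
  filter_upwards [h2.eventually (lt_mem_nhds h)] with m hm
  exact ⟨_, floor_le_nat u n m hu, hm⟩

lemma crossA_ind {ω : Ω} (hc : Continuous fun s => X s ω) (l y : ℝ) (n : ℕ) :
    ∀ᶠ m : ℕ in atTop, ω ∈ gridA X l y (gr m) (n * (m + 1)) ↔ ω ∈ crossA X l y n := by
  by_cases h : ω ∈ crossA X l y n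
  · obtain ⟨m, hm⟩ := mem_iUnion.1 h
    obtain ⟨k, hk, hk2⟩ := hm
    filter_upwards [crossA_ev hc (gr_le m n hk) hk2] with m hm
    simp [h, hm]
  · refine Eventually.of_forall fun m => ?_
    simp only [h, iff_false]
    exact fun h' => h (mem_iUnion.2 ⟨m, h'⟩)

lemma gridO_ev {ω : Ω} (hc : Continuous fun s => X s ω) (h0 : X 0 ω = 0) (l : ℝ) {y ε : ℝ}
    (hy : 0 < y) (hε : 0 < ε) (n : ℕ) :
    ∀ᶠ m : ℕ in atTop, ω ∈ gridO X l y ε (gr m) (n * (m + 1)) ↔ ω ∈ (∅ : Set Ω) := by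
  have h1 : Continuous fun s : ℝ≥0 => X s ω - l * s := by fun_prop
  have hK : IsCompact (Icc (0 : ℝ≥0) n) := isCompact_Icc
  have hu := Metric.uniformContinuousOn_iff.1 (hK.uniformContinuousOn_of_continuous h1.continuousOn)
  obtain ⟨δ, hδ, hu⟩ := hu ε hε
  have h3 : Tendsto (fun m : ℕ => 1 / ((m : ℝ) + 1)) atTop (𝓝 0) :=
    tendsto_one_div_add_atTop_nhds_zero_nat
  filter_upwards [h3.eventually (gt_mem_nhds hδ)] with m hm
  simp only [mem_empty_iff_false, iff_false]
  rintro (h | ⟨k, hk, h⟩)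
  · simp [gr, h0] at h
    linarith
  · have := hu (gr m (k + 1)) ⟨zero_le, gr_le m n hk⟩ (gr m k) ⟨zero_le, gr_le m n hk.le⟩ (by
      rw [NNReal.dist_eq]
      simp only [gr, NNReal.coe_div, NNReal.coe_natCast, NNReal.coe_add, NNReal.coe_one]
      rw [← sub_div]
      push_cast
      rw [add_sub_cancel_left, abs_of_nonneg (by positivity)]
      exact hm)
    rw [Real.dist_eq] at this
    have h4 := le_abs_self ((X (gr m (k + 1)) ω - l * (gr m (k + 1))) - (X (gr m k) ω - l * (gr m k)))
    linarith

lemma tilt_cross (hX : IsPreBrownianReal X P) [IsProbabilityMeasure P]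
    (hm : ∀ s, Measurable (X s)) (hc : ∀ᵐ ω ∂P, Continuous fun s => X s ω)
    {l y : ℝ} (hl : 0 < l) (hy : 0 < y) (n : ℕ) :
    tiltQ P X l n (crossA X l y n) = ENNReal.ofReal (Real.exp (2 * l * y)) * P (crossA X l y n) := by
  have hQ := tiltQ_prob hX l (n : ℝ≥0)
  have hac : tiltQ P X l n ≪ P := withDensity_absolutelyContinuous _ _
  have hz : ∀ᵐ ω ∂P, X 0 ω = 0 := hX.eval_zero_ae_eq_zero
  have gm : ∀ m, MeasurableSet (gridA X l y (gr m) (n * (m + 1))) := fun m =>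
    pastSigma_le hm _ _ (gridA_meas l y (gr_mono m) _)
  have lP : Tendsto (fun m : ℕ => P (gridA X l y (gr m) (n * (m + 1)))) atTop
      (𝓝 (P (crossA X l y n))) :=
    tendsto_measure_of_ae_tendsto_indicator_of_isFiniteMeasure _ (crossA_meas hm l y n) gm
      (hc.mono fun ω h => crossA_ind h l y n)
  have lQ : Tendsto (fun m : ℕ => tiltQ P X l n (gridA X l y (gr m) (n * (m + 1)))) atTop
      (𝓝 (tiltQ P X l n (crossA X l y n))) :=
    tendsto_measure_of_ae_tendsto_indicator_of_isFiniteMeasure _ (crossA_meas hm l y n) gm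
      (hac.ae_le (hc.mono fun ω h => crossA_ind h l y n))
  have lO : ∀ ε > 0, Tendsto (fun m : ℕ => tiltQ P X l n (gridO X l y ε (gr m) (n * (m + 1)))) atTop
      (𝓝 0) := by
    intro ε hε
    have := tendsto_measure_of_ae_tendsto_indicator_of_isFiniteMeasure (μ := tiltQ P X l n) atTop
      MeasurableSet.empty (fun m => gridO_meas hm l y ε (gr m) (n * (m + 1)))
      (hac.ae_le (by filter_upwards [hc, hz] with ω h h0 using gridO_ev h h0 l hy hε n))
    simpa using this
  apply le_antisymm
  · have key : ∀ ε > 0, tiltQ P X l n (crossA X l y n) ≤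
        ENNReal.ofReal (Real.exp (2 * l * (y + ε))) * P (crossA X l y n) := by
      intro ε hε
      have h1 := (ENNReal.Tendsto.const_mul (a := ENNReal.ofReal (Real.exp (2 * l * (y + ε)))) lP
        (Or.inr ENNReal.ofReal_ne_top)).add (lO ε hε)
      rw [add_zero] at h1
      exact le_of_tendsto_of_tendsto' lQ h1 fun m =>
        grid_upper hX hm hl (gr_mono m) _ (gr_le m n le_rfl)
    have h2 : Tendsto (fun k : ℕ => ENNReal.ofReal (Real.exp (2 * l * (y + 1 / ((k : ℝ) + 1)))) *
        P (crossA X l y n)) atTop (𝓝 (ENNReal.ofReal (Real.exp (2 * l * (y + 0))) *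
        P (crossA X l y n))) := by
      refine ENNReal.Tendsto.mul_const ?_ (Or.inr (measure_ne_top _ _))
      refine ENNReal.tendsto_ofReal ?_
      refine (Real.continuous_exp.tendsto _).comp ?_
      exact (tendsto_const_nhds.add tendsto_one_div_add_atTop_nhds_zero_nat).const_mul _
    rw [add_zero] at h2
    exact ge_of_tendsto' h2 fun k => key _ (by positivity)
  · exact le_of_tendsto_of_tendsto' (ENNReal.Tendsto.const_mul lP (Or.inr ENNReal.ofReal_ne_top)) lQ
      fun m => grid_lower hX hm hl (gr_mono m) _ (gr_le m n le_rfl)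

lemma tilt_compl (hX : IsPreBrownianReal X P) [IsProbabilityMeasure P]
    (hm : ∀ s, Measurable (X s)) {l y : ℝ} (hl : 0 < l) (n : ℕ) :
    tiltQ P X l n (crossA X l y n)ᶜ ≤
      ENNReal.ofReal (Real.exp (l * y) * Real.exp (- (l ^ 2 / 2 * n))) := by
  rw [tiltQ, withDensity_apply _ (crossA_meas hm l y n).compl]
  have h1 : ∀ ω ∈ (crossA X l y n)ᶜ, expM X l n ω ≤
      ENNReal.ofReal (Real.exp (l * y - l ^ 2 * n)) *
        ENNReal.ofReal (Real.exp (l * X n ω)) := by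
    intro ω hω
    have h2 : X n ω - l * n ≤ y := by
      by_contra h
      push Not at h
      refine hω (mem_iUnion.2 ⟨0, ⟨n, by simp, ?_⟩⟩)
      simpa [gr] using h
    rw [← ENNReal.ofReal_mul (Real.exp_pos _).le, ← Real.exp_add]
    unfold expM
    gcongr
    simp only [NNReal.coe_natCast]
    nlinarith
  refine (setLIntegral_mono' (crossA_meas hm l y n).compl h1).trans ?_
  refine (setLIntegral_le_lintegral _ _).trans ?_
  rw [lintegral_const_mul' _ _ ENNReal.ofReal_ne_top, lintegral_exp_of_law (hX.hasLaw_eval n) l,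
    ← ENNReal.ofReal_mul (Real.exp_pos _).le, ← Real.exp_add, ← Real.exp_add]
  apply le_of_eq
  congr 2
  simp only [NNReal.coe_natCast]
  ring

lemma line_cross (hX : IsPreBrownianReal X P) [IsProbabilityMeasure P]
    (hm : ∀ s, Measurable (X s)) (hc : ∀ᵐ ω ∂P, Continuous fun s => X s ω)
    {l y : ℝ} (hl : 0 < l) (hy : 0 < y) :
    P {ω | ∃ s : ℝ≥0, y < X s ω - l * s} = ENNReal.ofReal (Real.exp (- (2 * l * y))) := by
  have h1 : {ω | ∃ s : ℝ≥0, y < X s ω - l * s} =ᵐ[P] ⋃ n, crossA X l y n := by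
    filter_upwards [hc] with ω h
    refine propext ⟨?_, ?_⟩
    · rintro ⟨s, hs⟩
      obtain ⟨n, hn⟩ := exists_nat_ge s
      obtain ⟨m, hm⟩ := (crossA_ev h hn hs).exists
      exact mem_iUnion.2 ⟨n, mem_iUnion.2 ⟨m, hm⟩⟩
    · intro h
      obtain ⟨n, h⟩ := mem_iUnion.1 h
      obtain ⟨m, h⟩ := mem_iUnion.1 h
      obtain ⟨k, hk, h⟩ := h
      exact ⟨_, h⟩
  rw [measure_congr h1]
  have mono : Monotone (crossA X l y) := by
    intro a b hab ω h
    obtain ⟨m, h⟩ := mem_iUnion.1 h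
    obtain ⟨k, hk, h⟩ := h
    exact mem_iUnion.2 ⟨m, k, hk.trans (Nat.mul_le_mul_right _ hab), h⟩
  have l1 : Tendsto (fun n => ENNReal.ofReal (Real.exp (2 * l * y)) * P (crossA X l y n)) atTop
      (𝓝 (ENNReal.ofReal (Real.exp (2 * l * y)) * P (⋃ n, crossA X l y n))) :=
    ENNReal.Tendsto.const_mul (tendsto_measure_iUnion_atTop mono) (Or.inr ENNReal.ofReal_ne_top)
  have l2 : Tendsto (fun n : ℕ => tiltQ P X l n (crossA X l y n)) atTop (𝓝 1) := by
    have l3 : Tendsto (fun n : ℕ => 1 -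
        ENNReal.ofReal (Real.exp (l * y) * Real.exp (- (l ^ 2 / 2 * n)))) atTop (𝓝 1) := by
      have : Tendsto (fun n : ℕ => Real.exp (l * y) * Real.exp (- (l ^ 2 / 2 * n))) atTop (𝓝 0) := by
        rw [← mul_zero (Real.exp (l * y))]
        refine Tendsto.const_mul _ (Real.tendsto_exp_neg_atTop_nhds_zero.comp ?_)
        exact Tendsto.const_mul_atTop (by positivity) tendsto_natCast_atTop_atTop
      have h := ENNReal.tendsto_ofReal this
      rw [ENNReal.ofReal_zero] at h
      have := ENNReal.Tendsto.sub (tendsto_const_nhds (x := (1 : ℝ≥0∞))) h (Or.inl ENNReal.one_ne_top)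
      simpa using this
    refine tendsto_of_tendsto_of_tendsto_of_le_of_le l3 tendsto_const_nhds ?_ ?_
    · intro n
      have := tiltQ_prob hX l (n : ℝ≥0)
      have h2 := prob_add_prob_compl (μ := tiltQ P X l n) (crossA_meas hm l y n)
      have h3 := tilt_compl hX hm hl (y := y) n
      simp only
      rw [tsub_le_iff_right, ← h2]
      gcongr
    · intro n
      have := tiltQ_prob hX l (n : ℝ≥0)
      exact prob_le_one
  have h4 := tendsto_nhds_unique l1 (l2.congr fun n => tilt_cross hX hm hc hl hy n)
  have h5 : ENNReal.ofReal (Real.exp (- (2 * l * y))) * ENNReal.ofReal (Real.exp (2 * l * y)) = 1 := by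
    rw [← ENNReal.ofReal_mul (Real.exp_pos _).le, ← Real.exp_add]
    simp
  calc P (⋃ n, crossA X l y n) = ENNReal.ofReal (Real.exp (- (2 * l * y))) *
        (ENNReal.ofReal (Real.exp (2 * l * y)) * P (⋃ n, crossA X l y n)) := by
          rw [← mul_assoc, h5, one_mul]
    _ = _ := by rw [h4, mul_one]

end lineB


section Hvar

/-- The smallest slope `l` such that `y + l s` dominates the path `f`. -/
def Hpath (y : ℝ) (f : ℝ≥0 → ℝ) : ℝ :=
  ⨆ i : ℕ × ℕ, (f (gr i.1 (i.2 + 1)) - y) / (gr i.1 (i.2 + 1) : ℝ)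

lemma measurable_Hpath (y : ℝ) : Measurable (Hpath y) := by
  unfold Hpath
  refine Measurable.iSup fun i => ?_
  exact ((measurable_pi_apply _).sub_const _).div_const _

lemma gr_pos (m k : ℕ) : 0 < (gr m (k + 1) : ℝ) := by
  unfold gr
  positivity

lemma Hpath_le_iff {f : ℝ≥0 → ℝ} (hc : Continuous f) (h0 : f 0 = 0) {y : ℝ} (hy : 0 < y)
    (hb : ∃ l : ℝ, ∀ s : ℝ≥0, f s ≤ y + l * s) (l : ℝ) :
    Hpath y f ≤ l ↔ ∀ s : ℝ≥0, f s ≤ y + l * s := by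
  constructor
  · intro h s
    have hbd : BddAbove (range fun i : ℕ × ℕ => (f (gr i.1 (i.2 + 1)) - y) / (gr i.1 (i.2 + 1) : ℝ)) := by
      obtain ⟨l', hl'⟩ := hb
      refine ⟨l', ?_⟩
      rintro _ ⟨i, rfl⟩
      simp only
      rw [div_le_iff₀ (gr_pos _ _)]
      linarith [hl' (gr i.1 (i.2 + 1))]
    have h1 : ∀ m k : ℕ, f (gr m k) ≤ y + l * gr m k := by
      intro m k
      rcases k with _ | k
      · simp [gr, h0, hy.le]
      · have := (le_ciSup hbd (m, k)).trans h
        simp only at this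
        rw [div_le_iff₀ (gr_pos _ _)] at this
        linarith
    have h2 : Continuous fun s : ℝ≥0 => y + l * s := by fun_prop
    exact le_of_tendsto_of_tendsto' ((hc.tendsto s).comp (gr_floor s)) ((h2.tendsto s).comp (gr_floor s))
      fun m => h1 _ _
  · intro h
    refine ciSup_le fun i => ?_
    rw [div_le_iff₀ (gr_pos _ _)]
    linarith [h (gr i.1 (i.2 + 1))]

variable {Ω : Type*} [MeasurableSpace Ω] {P : Measure Ω} {X : ℝ≥0 → Ω → ℝ}

lemma ae_lin_bdd (hX : IsPreBrownianReal X P) [IsProbabilityMeasure P]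
    (hm : ∀ s, Measurable (X s)) (hc : ∀ᵐ ω ∂P, Continuous fun s => X s ω) {y : ℝ} (hy : 0 < y) :
    ∀ᵐ ω ∂P, ∃ l : ℝ, ∀ s : ℝ≥0, X s ω ≤ y + l * s := by
  rw [ae_iff]
  have h1 : ∀ n : ℕ, P {ω | ¬ ∃ l : ℝ, ∀ s : ℝ≥0, X s ω ≤ y + l * s} ≤
      ENNReal.ofReal (Real.exp (- (2 * ((n : ℝ) + 1) * y))) := by
    intro n
    rw [← line_cross hX hm hc (l := (n : ℝ) + 1) (by positivity) hy]
    refine measure_mono fun ω hω => ?_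
    simp only [mem_ofPred_eq, not_exists, not_forall, not_le] at hω ⊢
    obtain ⟨s, hs⟩ := hω ((n : ℝ) + 1)
    exact ⟨s, by linarith⟩
  have h2 : Tendsto (fun n : ℕ => ENNReal.ofReal (Real.exp (- (2 * ((n : ℝ) + 1) * y)))) atTop
      (𝓝 0) := by
    rw [← ENNReal.ofReal_zero]
    refine ENNReal.tendsto_ofReal (Real.tendsto_exp_neg_atTop_nhds_zero.comp ?_)
    refine Tendsto.atTop_mul_const hy ?_
    refine Tendsto.const_mul_atTop (by norm_num) ?_
    exact tendsto_atTop_add_const_right _ _ tendsto_natCast_atTop_atTop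
  exact le_antisymm (ge_of_tendsto' h2 h1) zero_le

lemma meas_path (hm : ∀ s, Measurable (X s)) : Measurable fun ω s => X s ω :=
  measurable_pi_lambda _ hm

lemma H_law (hX : IsPreBrownianReal X P) [IsProbabilityMeasure P]
    (hm : ∀ s, Measurable (X s)) (hc : ∀ᵐ ω ∂P, Continuous fun s => X s ω) {y : ℝ} (hy : 0 < y) :
    P.map (fun ω => Hpath y (fun s => X s ω)) = expMeasure (2 * y) := by
  have hM : Measurable fun ω => Hpath y (fun s => X s ω) := (measurable_Hpath y).comp (meas_path hm)
  have := isProbabilityMeasure_expMeasure (r := 2 * y) (by positivity)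
  have := Measure.isProbabilityMeasure_map (μ := P) hM.aemeasurable
  have hpos : ∀ l : ℝ, 0 < l → P {ω | Hpath y (fun s => X s ω) ≤ l} =
      ENNReal.ofReal (1 - Real.exp (- (2 * y * l))) := by
    intro l hl
    have h1 : ({ω | Hpath y (fun s => X s ω) ≤ l}ᶜ : Set Ω) =ᵐ[P] {ω | ∃ s : ℝ≥0, y < X s ω - l * s} := by
      filter_upwards [hc, hX.eval_zero_ae_eq_zero, ae_lin_bdd hX hm hc hy] with ω h h0 hb
      refine propext ?_
      change (¬ (Hpath y (fun s => X s ω) ≤ l)) ↔ ∃ s : ℝ≥0, y < X s ω - l * s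
      rw [Hpath_le_iff h h0 hy hb]
      push Not
      exact exists_congr fun s => ⟨fun h => by linarith, fun h => by linarith⟩
    have h2 := measure_congr h1
    rw [line_cross hX hm hc hl hy] at h2
    have hms : MeasurableSet {ω | Hpath y (fun s => X s ω) ≤ l} := measurableSet_le hM measurable_const
    have h3 := prob_compl_eq_one_sub (μ := P) hms.compl
    rw [compl_compl, h2] at h3
    rw [h3, ENNReal.ofReal_sub _ (Real.exp_pos _).le, ENNReal.ofReal_one]
    ring_nf
  refine Measure.ext_of_Iic _ _ fun l => ?_
  rw [Measure.map_apply hM measurableSet_Iic, ← ofReal_cdf, cdf_expMeasure_eq (by positivity)]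
  change P {ω | Hpath y (fun s => X s ω) ≤ l} = _
  rcases lt_or_ge 0 l with hl | hl
  · rw [hpos l hl, if_pos hl.le]
  · have h0 : P {ω | Hpath y (fun s => X s ω) ≤ l} = 0 := by
      have h2 : Tendsto (fun n : ℕ => ENNReal.ofReal (1 - Real.exp (- (2 * y * (1 / ((n : ℝ) + 1))))))
          atTop (𝓝 (ENNReal.ofReal (1 - Real.exp (- (2 * y * 0))))) := by
        have h5 : Continuous fun x : ℝ => ENNReal.ofReal (1 - Real.exp (- (2 * y * x))) :=
          ENNReal.continuous_ofReal.comp (by fun_prop)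
        exact (h5.tendsto 0).comp tendsto_one_div_add_atTop_nhds_zero_nat
      have h3 : ENNReal.ofReal (1 - Real.exp (- (2 * y * 0))) = 0 := by simp
      rw [h3] at h2
      refine le_antisymm (ge_of_tendsto' h2 fun n => ?_) zero_le
      rw [← hpos _ (by positivity)]
      refine measure_mono fun ω hω => ?_
      have : (0 : ℝ) < 1 / ((n : ℝ) + 1) := by positivity
      exact le_trans (le_trans hω hl) this.le
    rw [h0]
    split_ifs with h
    · obtain rfl : l = 0 := le_antisymm hl h
      simp
    · simp

end Hvar


section maj

/-- The set defining the concave majorant. -/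
def majSet (f : ℝ → ℝ) (t : ℝ) : Set ℝ :=
  {y | ∃ c : ℝ → ℝ, ConcaveOn ℝ (Set.Ici 0) c ∧ (∀ u, 0 ≤ u → f u ≤ c u) ∧ y = c t}

lemma majSet_lb (f : ℝ → ℝ) {t : ℝ} (ht : 0 ≤ t) : f t ∈ lowerBounds (majSet f t) := by
  rintro _ ⟨c, -, h, rfl⟩
  exact h t ht

lemma affine_maj {f : ℝ → ℝ} (hf : ContinuousOn f (Ici 0)) {t : ℝ≥0} (ht : 0 < t)
    {y l : ℝ} (h1 : ∀ s : ℝ≥0, f (t + s) - f t ≤ y + l * s)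
    (h2 : ∀ s : ℝ≥0, (1 + (s : ℝ) / t) * f ((t ^ 2 / (t + s) : ℝ≥0)) - f t
      ≤ y + ((f t + y) / t - l) * s) : f t + y ∈ majSet f t := by
  have ht' : (0 : ℝ) < t := ht
  refine ⟨fun u => f t + y + l * (u - t), ?_, ?_, by simp⟩
  · refine ⟨convex_Ici 0, ?_⟩
    intro a _ b _ p q _ _ hpq
    simp only [smul_eq_mul]
    apply le_of_eq
    have : q = 1 - p := by linarith
    subst this
    ring
  · have hpos : ∀ u : ℝ, 0 < u → f u ≤ f t + y + l * (u - t) := by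
      intro u hu
      rcases le_total (t : ℝ) u with h | h
      · obtain ⟨s, hs⟩ : ∃ s : ℝ≥0, (s : ℝ) = u - t := ⟨⟨u - t, by linarith⟩, rfl⟩
        have := h1 s
        rw [hs, add_sub_cancel] at this
        linarith
      · have h3 : 0 ≤ (t : ℝ) ^ 2 / u - t := by
          rw [sub_nonneg, le_div_iff₀ hu]
          nlinarith
        obtain ⟨s, hs⟩ : ∃ s : ℝ≥0, (s : ℝ) = (t : ℝ) ^ 2 / u - t := ⟨⟨_, h3⟩, rfl⟩
        have := h2 s
        push_cast at this
        rw [hs] at this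
        have e : (t : ℝ) ^ 2 / (t + (t ^ 2 / u - t)) = u := by field_simp; simp
        rw [e] at this
        have e2 : (1 + ((t : ℝ) ^ 2 / u - t) / t) = t / u := by field_simp; ring
        rw [e2] at this
        have h4 := mul_le_mul_of_nonneg_left this (show (0 : ℝ) ≤ u / t by positivity)
        have e3 : u / t * ((t : ℝ) / u * f u - f t) = f u - u / t * f t := by field_simp
        have e4 : u / t * (y + ((f t + y) / t - l) * ((t : ℝ) ^ 2 / u - t)) =
          u / t * y + (f t + y) - l * t - u / t * (f t + y) + l * u := by field_simp; ring
        rw [e3, e4] at h4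
        linarith
    intro u hu
    rcases hu.eq_or_lt with rfl | hu
    · have c1 : Tendsto f (𝓝[>] 0) (𝓝 (f 0)) :=
        ((hf 0 (by simp)).mono Ioi_subset_Ici_self).tendsto
      have c2 : Continuous fun u : ℝ => f t + y + l * (u - t) := by fun_prop
      refine le_of_tendsto_of_tendsto c1 ((c2.tendsto 0).mono_left nhdsWithin_le_nhds) ?_
      filter_upwards [self_mem_nhdsWithin] with u hu using hpos u hu
    · exact hpos u hu

lemma support_line {c : ℝ → ℝ} (hc : ConcaveOn ℝ (Ici 0) c) {t : ℝ} (ht : 0 < t) :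
    ∃ l : ℝ, ∀ u, 0 ≤ u → c u ≤ c t + l * (u - t) := by
  have sl : ∀ u ∈ Ico 0 t, ∀ v, t < v → (c v - c t) / (v - t) ≤ (c t - c u) / (t - u) := by
    intro u hu v hv
    exact hc.slope_anti_adjacent hu.1 (show (0 : ℝ) ≤ v by linarith) hu.2 hv
  let S : Set ℝ := (fun u => (c t - c u) / (t - u)) '' Ico 0 t
  have hne : S.Nonempty := ⟨_, 0, ⟨le_rfl, ht⟩, rfl⟩
  refine ⟨sInf S, fun u hu => ?_⟩
  rcases lt_trichotomy u t with h | h | h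
  · have hb : BddBelow S := by
      refine ⟨(c (t + 1) - c t) / (t + 1 - t), ?_⟩
      rintro _ ⟨u, hu, rfl⟩
      exact sl u hu _ (by linarith)
    have h1 := csInf_le hb ⟨u, ⟨hu, h⟩, rfl⟩
    simp only at h1
    rw [le_div_iff₀ (by linarith)] at h1
    linarith
  · subst h; simp
  · have h1 : (c u - c t) / (u - t) ≤ sInf S := by
      refine le_csInf hne ?_
      rintro _ ⟨v, hv, rfl⟩
      exact sl v hv _ h
    rw [div_le_iff₀ (by linarith)] at h1
    linarith

lemma maj_cond {f : ℝ → ℝ} {t : ℝ≥0} (ht : 0 < t)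
    {y : ℝ} (hne : (majSet f t).Nonempty) (h : concaveMajorant f t < f t + y) :
    ∃ l : ℝ, (∀ s : ℝ≥0, f (t + s) - f t ≤ y + l * s) ∧
    (∀ s : ℝ≥0, (1 + (s : ℝ) / t) * f ((t ^ 2 / (t + s) : ℝ≥0)) - f t
      ≤ y + ((f t + y) / t - l) * s) := by
  have ht' : (0 : ℝ) < t := ht
  obtain ⟨_, ⟨c, hc, hfc, rfl⟩, hlt⟩ := exists_lt_of_csInf_lt hne h
  obtain ⟨l, hl⟩ := support_line hc ht'
  have key : ∀ u, 0 ≤ u → f u ≤ f t + y + l * (u - t) := fun u hu => by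
    linarith [hl u hu, hfc u hu]
  refine ⟨l, fun s => ?_, fun s => ?_⟩
  · have := key (t + s) (by positivity)
    rw [add_sub_cancel_left] at this
    linarith
  · have h1 := key ((t ^ 2 / (t + s) : ℝ≥0)) (by positivity)
    have h2 := mul_le_mul_of_nonneg_left h1 (show (0 : ℝ) ≤ 1 + (s : ℝ) / t by positivity)
    have hs : (0 : ℝ) < t + s := by positivity
    have e : (1 + (s : ℝ) / t) * (f t + y + l * (((t ^ 2 / (t + s) : ℝ≥0) : ℝ) - t)) =
        f t + y + ((f t + y) / t - l) * s := by
      push_cast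
      field_simp
      ring
    rw [e] at h2
    linarith

/-- Main deterministic statement. -/
lemma maj_path {f : ℝ → ℝ} (hf : ContinuousOn f (Ici 0)) {t : ℝ≥0} (ht : 0 < t)
    {y : ℝ} (hy : 0 < y) {u v : ℝ≥0 → ℝ} (hu : ∀ s, u s = f (t + s) - f t)
    (hv : ∀ s, v s = (1 + (s : ℝ) / t) * f ((t ^ 2 / (t + s) : ℝ≥0)) - f t)
    (bu : ∃ l : ℝ, ∀ s : ℝ≥0, u s ≤ y + l * s) (bv : ∃ l : ℝ, ∀ s : ℝ≥0, v s ≤ y + l * s) :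
    f t ≤ concaveMajorant f t ∧
    (concaveMajorant f t < f t + y → Hpath y u + Hpath y v ≤ (f t + y) / t) ∧
    (Hpath y u + Hpath y v ≤ (f t + y) / t → concaveMajorant f t ≤ f t + y) := by
  have ht' : (0 : ℝ) < t := ht
  have f1 : Continuous fun s : ℝ≥0 => f s := by
    have := hf.comp_continuous (f := fun s : ℝ≥0 => (s : ℝ)) (by fun_prop) (fun s => s.2)
    exact this
  have cu : Continuous u := by
    have : u = fun s : ℝ≥0 => f ((t + s : ℝ≥0)) - f t := by
      ext s; rw [hu]; simp
    rw [this]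
    have h2 : Continuous fun s : ℝ≥0 => f ((t + s : ℝ≥0)) := f1.comp (by fun_prop)
    exact h2.sub continuous_const
  have cv : Continuous v := by
    have : v = fun s : ℝ≥0 => (1 + (s : ℝ) / t) * f ((t ^ 2 / (t + s) : ℝ≥0)) - f t := by
      ext s; rw [hv]
    rw [this]
    have h2 : Continuous fun s : ℝ≥0 => f ((t ^ 2 / (t + s) : ℝ≥0)) := by
      refine f1.comp (Continuous.div₀ (by fun_prop) (by fun_prop) fun s => ?_)
      positivity
    refine Continuous.sub (Continuous.mul ?_ h2) continuous_const
    fun_prop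
  have u0 : u 0 = 0 := by rw [hu]; simp
  have v0 : v 0 = 0 := by
    rw [hv]
    have : (t ^ 2 / (t + 0) : ℝ≥0) = t := by
      rw [add_zero, pow_two, mul_div_assoc, div_self ht.ne', mul_one]
    rw [this]
    simp
  have hlb : BddBelow (majSet f t) := ⟨_, majSet_lb f ht'.le⟩
  have hne : (majSet f t).Nonempty := by
    obtain ⟨l, hl⟩ := bu
    obtain ⟨l', hl'⟩ := bv
    let y' := max y ((l + l') * t - f t)
    have hy1 : y ≤ y' := le_max_left _ _
    have hy2 : l' ≤ (f t + y') / t - l := by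
      rw [le_sub_iff_add_le, le_div_iff₀ ht']
      have : (l + l') * t - f t ≤ y' := le_max_right _ _
      linarith
    refine ⟨_, affine_maj hf ht (y := y') (l := l) (fun s => ?_) (fun s => ?_)⟩
    · rw [← hu]
      linarith [hl s]
    · rw [← hv]
      have := mul_le_mul_of_nonneg_right hy2 (NNReal.coe_nonneg s)
      linarith [hl' s]
  refine ⟨le_csInf hne (majSet_lb f ht'.le), fun h => ?_, fun h => ?_⟩
  · obtain ⟨l, h1, h2⟩ := maj_cond ht hne h
    have a1 := (Hpath_le_iff cu u0 hy bu l).2 (fun s => by rw [hu]; exact h1 s)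
    have a2 := (Hpath_le_iff cv v0 hy bv _).2 (fun s => by rw [hv]; exact h2 s)
    linarith
  · refine csInf_le hlb (affine_maj hf ht (l := Hpath y u) (fun s => ?_) (fun s => ?_))
    · rw [← hu]
      exact (Hpath_le_iff cu u0 hy bu _).1 le_rfl s
    · rw [← hv]
      exact (Hpath_le_iff cv v0 hy bv _).1 (by linarith) s

end maj


section law

lemma lint_ftc {G g : ℝ → ℝ} {a b : ℝ} (hab : a ≤ b) (hd : ∀ x, HasDerivAt G (g x) x)
    (hg : Continuous g) (h0 : ∀ x ∈ Ioc a b, 0 ≤ g x) :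
    ∫⁻ x in Ioc a b, ENNReal.ofReal (g x) = ENNReal.ofReal (G b - G a) := by
  have hi : IntervalIntegrable g volume a b := hg.intervalIntegrable a b
  rw [← intervalIntegral.integral_eq_sub_of_hasDerivAt (fun x _ => hd x) hi,
    intervalIntegral.integral_of_le hab, ofReal_integral_eq_lintegral_ofReal hi.1]
  exact (ae_restrict_iff' measurableSet_Ioc).2 (ae_of_all _ h0)

lemma exp_Iic {r : ℝ} (hr : 0 < r) (x : ℝ) :
    expMeasure r (Iic x) = ENNReal.ofReal (if 0 ≤ x then 1 - Real.exp (- (r * x)) else 0) := by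
  have := isProbabilityMeasure_expMeasure hr
  rw [← ofReal_cdf, cdf_expMeasure_eq hr]

lemma exp_sum {r : ℝ} (hr : 0 < r) (m : ℝ) :
    ((expMeasure r).prod (expMeasure r)) {p | p.1 + p.2 ≤ m} =
      ENNReal.ofReal (if 0 ≤ m then 1 - Real.exp (- (r * m)) * (1 + r * m) else 0) := by
  have := isProbabilityMeasure_expMeasure hr
  have hms : MeasurableSet {p : ℝ × ℝ | p.1 + p.2 ≤ m} :=
    measurableSet_le (by fun_prop) measurable_const
  rw [Measure.prod_apply hms]
  have h1 : ∀ a : ℝ, (expMeasure r) (Prod.mk a ⁻¹' {p : ℝ × ℝ | p.1 + p.2 ≤ m}) =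
      ENNReal.ofReal (if 0 ≤ m - a then 1 - Real.exp (- (r * (m - a))) else 0) := by
    intro a
    rw [← exp_Iic hr]
    congr 1
    ext b
    simp only [mem_preimage, mem_ofPred_eq, mem_Iic]
    constructor <;> intro h <;> linarith
  simp_rw [h1]
  have e : expMeasure r = volume.withDensity (exponentialPDF r) := rfl
  have hpm : Measurable (exponentialPDF r) := (measurable_exponentialPDFReal r).ennreal_ofReal
  have hmm : Measurable fun a : ℝ => ENNReal.ofReal (if 0 ≤ m - a then 1 - Real.exp (- (r * (m - a))) else 0) := by
    refine Measurable.ennreal_ofReal (Measurable.ite (measurableSet_le measurable_const (by fun_prop)) ?_ measurable_const)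
    fun_prop
  rw [e, lintegral_withDensity_eq_lintegral_mul _ hpm hmm]
  have h2 : ∀ a : ℝ, a ≠ 0 → (exponentialPDF r * fun a : ℝ => ENNReal.ofReal
      (if 0 ≤ m - a then 1 - Real.exp (- (r * (m - a))) else 0)) a =
      (Ioc 0 m).indicator (fun a => ENNReal.ofReal (r * Real.exp (- (r * a)) - r * Real.exp (- (r * m)))) a := by
    intro a ha
    simp only [Pi.mul_apply]
    by_cases h : a ∈ Ioc 0 m
    · rw [indicator_of_mem h, if_pos (by linarith [h.2]), exponentialPDF_of_nonneg h.1.le,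
        ← ENNReal.ofReal_mul (by positivity)]
      congr 1
      rw [mul_sub, mul_one, mul_assoc, ← Real.exp_add]
      congr 3
      ring
    · rw [indicator_of_notMem h]
      rcases lt_or_gt_of_ne ha with h3 | h3
      · rw [exponentialPDF_of_neg h3, zero_mul]
      · rw [if_neg, ENNReal.ofReal_zero, mul_zero]
        intro h4
        exact h ⟨h3, by linarith⟩
  have h3 : ∀ᵐ a : ℝ, a ≠ 0 := by
    rw [ae_iff]; simp
  rw [lintegral_congr_ae (h3.mono h2), lintegral_indicator measurableSet_Ioc]
  split_ifs with hm
  · rw [lint_ftc (G := fun a => - Real.exp (- (r * a)) - a * (r * Real.exp (- (r * m)))) hm ?_ (by fun_prop)]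
    · congr 1
      simp
      ring
    · intro x hx
      rw [sub_nonneg]
      gcongr
      exact hx.2
    · intro x
      convert! (hasDerivAt_neg_exp_mul_exp (r := r) (x := x)).sub ((hasDerivAt_id x).mul_const (r * Real.exp (- (r * m)))) using 1
      simp
  · rw [Ioc_eq_empty (by linarith)]
    simp

lemma jd_eq {t : ℝ≥0} (ht : 0 < t) {y b : ℝ} (h1 : 0 < y) (h2 : 0 < b + y) :
    jointDensKBX t y (b + 2 * y) = gaussianPDFReal 0 t b *
      (4 * y * (b + y) * (b + 2 * y) / (t : ℝ) ^ 2 * Real.exp (- (2 * y * (b + y) / t))) := by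
  have ht' : (0 : ℝ) < t := ht
  rw [jointDensKBX, if_pos ⟨h1, by linarith⟩, stdGaussianPDF, gaussianPDFReal]
  have e1 : (t : ℝ) ^ (-(5 : ℝ) / 2) = ((t : ℝ) ^ 2)⁻¹ * (Real.sqrt t)⁻¹ := by
    rw [Real.sqrt_eq_rpow, ← Real.rpow_natCast, ← Real.rpow_neg ht'.le, ← Real.rpow_neg ht'.le,
      ← Real.rpow_add ht']
    norm_num
  have e2 : Real.exp (-((b + 2 * y) / Real.sqrt t) ^ 2 / 2) =
      Real.exp (- (b - 0) ^ 2 / (2 * t)) * Real.exp (- (2 * y * (b + y) / t)) := by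
    rw [← Real.exp_add]
    congr 1
    rw [div_pow, Real.sq_sqrt ht'.le]
    field_simp
    ring
  rw [e1, e2, Real.sqrt_mul (by positivity) (t : ℝ), mul_inv]
  have : (Real.sqrt t) ≠ 0 := by positivity
  field_simp
  ring

lemma jd_inner {t : ℝ≥0} (ht : 0 < t) {y : ℝ} (hy : 0 < y) (b : ℝ) :
    ∫⁻ u in Iic y, ENNReal.ofReal (jointDensKBX t u (b + 2 * u)) =
      gaussianPDF 0 t b * ENNReal.ofReal (if 0 ≤ (b + y) / t then
        1 - Real.exp (- (2 * y * ((b + y) / t))) * (1 + 2 * y * ((b + y) / t)) else 0) := by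
  have ht' : (0 : ℝ) < t := ht
  let a := max 0 (- b)
  have ha0 : 0 ≤ a := le_max_left _ _
  have hab : - b ≤ a := le_max_right _ _
  let g : ℝ → ℝ := fun u => gaussianPDFReal 0 t b *
      (4 * u * (b + u) * (b + 2 * u) / (t : ℝ) ^ 2 * Real.exp (- (2 * u * (b + u) / t)))
  have h1 : ∀ u, (Iic y).indicator (fun u => ENNReal.ofReal (jointDensKBX t u (b + 2 * u))) u =
      (Ioc a y).indicator (fun u => ENNReal.ofReal (g u)) u := by
    intro u
    by_cases h : u ∈ Ioc a y
    · rw [indicator_of_mem h, indicator_of_mem (show u ∈ Iic y from h.2),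
        jd_eq ht (lt_of_le_of_lt ha0 h.1) (by linarith [h.1])]
    · rw [indicator_of_notMem h]
      by_cases h' : u ∈ Iic y
      · rw [indicator_of_mem h', jointDensKBX, if_neg, ENNReal.ofReal_zero]
        rintro ⟨h3, h4⟩
        exact h ⟨max_lt h3 (by linarith), h'⟩
      · rw [indicator_of_notMem h']
  rw [← lintegral_indicator measurableSet_Iic]
  simp_rw [h1]
  rw [lintegral_indicator measurableSet_Ioc]
  by_cases hay : a ≤ y
  · have hby : 0 ≤ b + y := by linarith
    rw [if_pos (by positivity), gaussianPDF, ← ENNReal.ofReal_mul (gaussianPDFReal_nonneg _ _ _)]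
    rw [lint_ftc (G := fun u => gaussianPDFReal 0 t b *
        (1 - Real.exp (- (2 * u * (b + u) / t)) * (1 + 2 * u * (b + u) / t))) hay ?_ (by fun_prop)]
    · congr 1
      have hr : a * (b + a) = 0 := by
        rcases le_total 0 (- b) with h | h
        · have : a = - b := max_eq_right h
          rw [this]; ring
        · have : a = 0 := max_eq_left h
          rw [this]; ring
      have h5 : 2 * a * (b + a) / (t : ℝ) = 0 := by rw [mul_assoc, hr]; simp
      rw [h5]
      simp only [mul_div_assoc]
      simp
    · intro x hx
      have h6 : 0 ≤ x := ha0.trans hx.1.le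
      have h7 : 0 ≤ b + x := by linarith [hx.1]
      have h8 : 0 ≤ b + 2 * x := by linarith
      exact mul_nonneg (gaussianPDFReal_nonneg _ _ _) (by positivity)
    · intro x
      have d1 : HasDerivAt (fun u : ℝ => 2 * u * (b + u) / t) (2 * (b + 2 * x) / t) x := by
        have := ((((hasDerivAt_id x).const_mul 2).mul ((hasDerivAt_id x).const_add b)).div_const (t : ℝ))
        convert! this using 1
        simp
        ring
      have d2 := (((d1.neg.exp.mul (d1.const_add 1)).const_sub 1).const_mul (gaussianPDFReal 0 t b))
      convert! d2 using 1
      simp only [g, Pi.neg_apply]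
      field_simp
      ring
  · have hby : b + y < 0 := by
      by_contra h
      exact hay (max_le hy.le (by linarith))
    rw [Ioc_eq_empty (fun h => hay h.le), if_neg]
    · simp
    · rw [not_le]
      exact div_neg_of_neg_of_pos hby ht'

end law


section joint

variable {Ω : Type*} [MeasurableSpace Ω] {P : Measure Ω} {W : ℝ≥0 → Ω → ℝ}

/-- The future increments after time `t`. -/
def futProc (W : ℝ≥0 → Ω → ℝ) (t s : ℝ≥0) (ω : Ω) : ℝ := W (t + s) ω - W t ω

lemma futProc_meas (hm : ∀ s, Measurable (W s)) (t s : ℝ≥0) : Measurable (futProc W t s) :=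
  (hm _).sub (hm _)

lemma pastProc_meas (hm : ∀ s, Measurable (W s)) (t s : ℝ≥0) : Measurable (pastProc W t s) :=
  ((hm _).const_mul _).sub (hm _)

lemma futProc_cont (hc : ∀ᵐ ω ∂P, Continuous fun s => W s ω) (t : ℝ≥0) :
    ∀ᵐ ω ∂P, Continuous fun s => futProc W t s ω := by
  filter_upwards [hc] with ω h
  exact (h.comp (continuous_const.add continuous_id)).sub continuous_const

lemma pastProc_cont (hc : ∀ᵐ ω ∂P, Continuous fun s => W s ω) {t : ℝ≥0} (ht : 0 < t) :
    ∀ᵐ ω ∂P, Continuous fun s => pastProc W t s ω := by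
  filter_upwards [hc] with ω h
  refine Continuous.sub (Continuous.mul (by fun_prop) (h.comp ?_)) continuous_const
  refine Continuous.div₀ (by fun_prop) (by fun_prop) fun s => ?_
  positivity

/-- slope variable for the future -/
def hU (W : ℝ≥0 → Ω → ℝ) (t : ℝ≥0) (y : ℝ) (ω : Ω) : ℝ := Hpath y (fun s => futProc W t s ω)

/-- slope variable for the past -/
def hV (W : ℝ≥0 → Ω → ℝ) (t : ℝ≥0) (y : ℝ) (ω : Ω) : ℝ := Hpath y (fun s => pastProc W t s ω)

lemma hU_meas (hm : ∀ s, Measurable (W s)) (t : ℝ≥0) (y : ℝ) : Measurable (hU W t y) :=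
  (measurable_Hpath y).comp (meas_path (futProc_meas hm t))

lemma hV_meas (hm : ∀ s, Measurable (W s)) (t : ℝ≥0) (y : ℝ) : Measurable (hV W t y) :=
  (measurable_Hpath y).comp (meas_path (pastProc_meas hm t))

lemma past_le (t s : ℝ≥0) : t ^ 2 / (t + s) ≤ t := by
  rcases eq_or_ne (t + s) 0 with h | h
  · simp [h]
  · rw [div_le_iff₀ (pos_iff_ne_zero.2 h), pow_two]
    gcongr
    simp

lemma hUV_law (hW : IsPreBrownianReal W P) [IsProbabilityMeasure P]
    (hm : ∀ s, Measurable (W s)) (hc : ∀ᵐ ω ∂P, Continuous fun s => W s ω)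
    {t : ℝ≥0} (ht : 0 < t) {y : ℝ} (hy : 0 < y) :
    P.map (fun ω => (hU W t y ω, (hV W t y ω, W t ω))) =
      (expMeasure (2 * y)).prod ((expMeasure (2 * y)).prod (gaussianReal 0 t)) := by
  have i1 : IndepFun (hU W t y) (fun ω => (hV W t y ω, W t ω)) P := by
    have h1 := hW.indepFun_shift t
    let G : (Set.Iic t → ℝ) → ℝ × ℝ := fun f =>
      (Hpath y (fun s => (1 + (s : ℝ) / t) * f ⟨t ^ 2 / (t + s), past_le t s⟩ - f ⟨t, Set.mem_Iic.2 le_rfl⟩),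
        f ⟨t, Set.mem_Iic.2 le_rfl⟩)
    have hG : Measurable G := by
      refine Measurable.prodMk ((measurable_Hpath y).comp ?_) (measurable_pi_apply _)
      exact measurable_pi_lambda _ fun s =>
        ((measurable_pi_apply _).const_mul _).sub (measurable_pi_apply _)
    exact h1.comp (measurable_Hpath y) hG
  have i2 : IndepFun (hV W t y) (W t) P :=
    (pastProc_indep hW ht).comp (measurable_Hpath y) measurable_id
  rw [i1.map_prod_eq_prod_map_map (hU_meas hm t y).aemeasurable
      ((hV_meas hm t y).prodMk (hm t)).aemeasurable,
    i2.map_prod_eq_prod_map_map (hV_meas hm t y).aemeasurable (hm t).aemeasurable]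
  have l1 : P.map (hU W t y) = expMeasure (2 * y) :=
    H_law (hW.shift t) (futProc_meas hm t) (futProc_cont hc t) hy
  have l2 : P.map (hV W t y) = expMeasure (2 * y) :=
    H_law (pastProc_pre hW ht) (pastProc_meas hm t) (pastProc_cont hc ht) hy
  rw [l1, l2, (hW.hasLaw_eval t).map_eq]

/-- The event that some line through `(t, W t + y)` dominates. -/
def evE (W : ℝ≥0 → Ω → ℝ) (t : ℝ≥0) (y : ℝ) : Set Ω :=
  {ω | hU W t y ω + hV W t y ω ≤ (W t ω + y) / t}

lemma evE_meas (hm : ∀ s, Measurable (W s)) (t : ℝ≥0) (y : ℝ) : MeasurableSet (evE W t y) := by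
  have h1 := hU_meas hm t y
  have h2 := hV_meas hm t y
  have h3 := hm t
  exact measurableSet_le (by fun_prop) (by fun_prop)

lemma jd_meas (t : ℝ) : Measurable fun p : ℝ × ℝ => ENNReal.ofReal (jointDensKBX t p.1 p.2) := by
  refine Measurable.ennreal_ofReal ?_
  unfold jointDensKBX
  refine Measurable.ite ?_ ?_ measurable_const
  · exact (measurableSet_lt measurable_const measurable_fst).inter
      (measurableSet_lt measurable_fst measurable_snd)
  · unfold stdGaussianPDF
    fun_prop

/-- Joint law candidate of `(K - B, B)`. -/
def nuL (t : ℝ) : Measure (ℝ × ℝ) :=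
  (volume : Measure (ℝ × ℝ)).withDensity
    (fun p => ENNReal.ofReal (jointDensKBX t p.1 (p.2 + 2 * p.1)))

lemma jd_meas' (t : ℝ) :
    Measurable fun p : ℝ × ℝ => ENNReal.ofReal (jointDensKBX t p.1 (p.2 + 2 * p.1)) :=
  (jd_meas t).comp (g := fun p : ℝ × ℝ => ENNReal.ofReal (jointDensKBX t p.1 p.2))
    (f := fun p : ℝ × ℝ => (p.1, p.2 + 2 * p.1)) (by fun_prop)

lemma nuL_rect (t : ℝ) {A C : Set ℝ} (hA : MeasurableSet A) (hC : MeasurableSet C) :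
    nuL t (A ×ˢ C) = ∫⁻ b in C, ∫⁻ u in A, ENNReal.ofReal (jointDensKBX t u (b + 2 * u)) := by
  rw [nuL, withDensity_apply _ (hA.prod hC), Measure.volume_eq_prod, ← Measure.prod_restrict,
    lintegral_prod_symm _ (jd_meas' t).aemeasurable]

lemma evE_law (hW : IsPreBrownianReal W P) [IsProbabilityMeasure P]
    (hm : ∀ s, Measurable (W s)) (hc : ∀ᵐ ω ∂P, Continuous fun s => W s ω)
    {t : ℝ≥0} (ht : 0 < t) {y : ℝ} (hy : 0 < y) {C : Set ℝ} (hC : MeasurableSet C) :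
    P (evE W t y ∩ W t ⁻¹' C) = nuL t (Iic y ×ˢ C) := by
  have hr : 0 < 2 * y := by positivity
  have := isProbabilityMeasure_expMeasure hr
  let S : Set (ℝ × (ℝ × ℝ)) := {p | p.1 + p.2.1 ≤ (p.2.2 + y) / t} ∩ {p | p.2.2 ∈ C}
  have hS : MeasurableSet S := by
    refine (measurableSet_le (by fun_prop) (by fun_prop)).inter ?_
    exact (measurable_snd.comp measurable_snd) hC
  have h1 : P (evE W t y ∩ W t ⁻¹' C) =
      P.map (fun ω => (hU W t y ω, (hV W t y ω, W t ω))) S := by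
    rw [Measure.map_apply ((hU_meas hm t y).prodMk ((hV_meas hm t y).prodMk (hm t))) hS]
    rfl
  rw [h1, hUV_law hW hm hc ht hy, ← Measure.prodAssoc_prod,
    Measure.map_apply MeasurableEquiv.prodAssoc.measurable hS,
    Measure.prod_apply_symm (MeasurableEquiv.prodAssoc.measurable hS),
    nuL_rect _ measurableSet_Iic hC]
  simp_rw [jd_inner ht hy]
  have h2 : ∀ b : ℝ, ((expMeasure (2 * y)).prod (expMeasure (2 * y)))
      ((fun x => (x, b)) ⁻¹' ((MeasurableEquiv.prodAssoc : (ℝ × ℝ) × ℝ ≃ᵐ ℝ × ℝ × ℝ) ⁻¹' S)) =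
      C.indicator (fun b => ENNReal.ofReal (if 0 ≤ (b + y) / t then
        1 - Real.exp (- (2 * y * ((b + y) / t))) * (1 + 2 * y * ((b + y) / t)) else 0)) b := by
    intro b
    by_cases hb : b ∈ C
    · rw [indicator_of_mem hb, ← exp_sum hr]
      congr 1
      ext p
      exact ⟨fun h => h.1, fun h => ⟨h, hb⟩⟩
    · rw [indicator_of_notMem hb]
      have : ((fun x => (x, b)) ⁻¹' ((MeasurableEquiv.prodAssoc : (ℝ × ℝ) × ℝ ≃ᵐ ℝ × ℝ × ℝ) ⁻¹' S))
          = (∅ : Set (ℝ × ℝ)) := by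
        ext p
        exact ⟨fun h => hb h.2, fun h => h.elim⟩
      rw [this, measure_empty]
  simp_rw [h2]
  rw [lintegral_indicator hC, gaussianReal_of_var_ne_zero _ ht.ne']
  rw [setLIntegral_withDensity_eq_setLIntegral_mul _ (measurable_gaussianPDF _ _) ?_ hC]
  · rfl
  · refine Measurable.ennreal_ofReal (Measurable.ite ?_ (by fun_prop) measurable_const)
    exact measurableSet_le measurable_const (by fun_prop)

end joint


section fin

variable {Ω : Type*} [MeasurableSpace Ω] {P : Measure Ω}

lemma shear_pres : MeasurePreserving (fun p : ℝ × ℝ => (p.1, p.2 + 2 * p.1))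
    (volume : Measure (ℝ × ℝ)) volume := by
  rw [Measure.volume_eq_prod]
  refine MeasurePreserving.skew_product (g := fun a b : ℝ => b + 2 * a) (MeasurePreserving.id _) ?_ ?_
  · simp only [Function.uncurry_def]
    fun_prop
  · exact ae_of_all _ fun a => (measurePreserving_add_right volume (2 * a)).map_eq

lemma nuL_map (t : ℝ) : (nuL t).map (fun p : ℝ × ℝ => (p.1, p.2 + 2 * p.1)) =
    (volume : Measure (ℝ × ℝ)).withDensity (fun p => ENNReal.ofReal (jointDensKBX t p.1 p.2)) := by
  ext A hA
  rw [Measure.map_apply shear_pres.measurable hA, nuL, withDensity_apply _ (shear_pres.measurable hA),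
    withDensity_apply _ hA]
  exact shear_pres.setLIntegral_comp_preimage hA (jd_meas t)

lemma nuL_zero (t : ℝ) {y : ℝ} (hy : y ≤ 0) {C : Set ℝ} (hC : MeasurableSet C) :
    nuL t (Iic y ×ˢ C) = 0 := by
  rw [nuL_rect t measurableSet_Iic hC]
  have : ∀ b : ℝ, ∫⁻ u in Iic y, ENNReal.ofReal (jointDensKBX t u (b + 2 * u)) = 0 := by
    intro b
    rw [setLIntegral_congr_fun measurableSet_Iic (g := fun _ => 0), lintegral_zero]
    intro u hu
    have : ¬ (0 < u ∧ u < b + 2 * u) := fun h => absurd (lt_of_lt_of_le h.1 hu) (not_lt.2 hy)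
    simp [jointDensKBX, this]
  simp [this]

/-- Abstract identification of a joint law from a sandwich. -/
lemma law_of_sandwich [IsProbabilityMeasure P] {Y Z : Ω → ℝ} (hZ : Measurable Z) {t : ℝ}
    {E : ℝ → Set Ω} (hE : ∀ y, MeasurableSet (E y)) (h0 : ∀ᵐ ω ∂P, 0 ≤ Y ω)
    (h1 : ∀ y, 0 < y → ∀ᵐ ω ∂P, (Y ω < y → ω ∈ E y) ∧ (ω ∈ E y → Y ω ≤ y))
    (h2 : ∀ y, 0 < y → ∀ C, MeasurableSet C → P (E y ∩ Z ⁻¹' C) = nuL t (Iic y ×ˢ C)) :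
    AEMeasurable Y P ∧ P.map (fun ω => (Y ω, Z ω)) = nuL t := by
  have hε : ∀ n : ℕ, (0 : ℝ) < 1 / ((n : ℝ) + 1) := fun n => by positivity
  have hnull : ∀ y, NullMeasurableSet {ω | Y ω ≤ y} P := by
    intro y
    rcases lt_or_ge y 0 with hy | hy
    · have : ({ω | Y ω ≤ y} : Set Ω) =ᵐ[P] (∅ : Set Ω) := by
        filter_upwards [h0] with ω h
        refine propext ⟨fun h' => ?_, fun h' => h'.elim⟩
        exact absurd (le_trans h h') (not_le.2 hy)
      exact MeasurableSet.empty.nullMeasurableSet.congr this.symm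
    · have : ({ω | Y ω ≤ y} : Set Ω) =ᵐ[P] (⋂ n : ℕ, E (y + 1 / ((n : ℝ) + 1)) : Set Ω) := by
        have h3 := ae_all_iff.2 fun n : ℕ => h1 (y + 1 / ((n : ℝ) + 1)) (by linarith [hε n])
        filter_upwards [h3] with ω h
        refine propext ⟨fun h' => mem_iInter.2 fun n => (h n).1 ?_, fun h' => ?_⟩
        · exact lt_of_le_of_lt h' (by linarith [hε n])
        · have h4 : ∀ n : ℕ, Y ω ≤ y + 1 / ((n : ℝ) + 1) := fun n => (h n).2 (mem_iInter.1 h' n)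
          have h5 : Tendsto (fun n : ℕ => y + 1 / ((n : ℝ) + 1)) atTop (𝓝 (y + 0)) :=
            tendsto_const_nhds.add tendsto_one_div_add_atTop_nhds_zero_nat
          rw [add_zero] at h5
          exact ge_of_tendsto' h5 h4
      exact (MeasurableSet.iInter fun n => hE _).nullMeasurableSet.congr this.symm
  have hY : AEMeasurable Y P := by
    refine NullMeasurable.aemeasurable ?_
    exact measurable_of_Iic (δ := NullMeasurableSpace Ω P) (f := Y) hnull
  refine ⟨hY, ?_⟩
  have key : ∀ (y : ℝ) (C : Set ℝ), MeasurableSet C →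
      P ({ω | Y ω ≤ y} ∩ Z ⁻¹' C) = nuL t (Iic y ×ˢ C) := by
    intro y C hC
    rcases lt_or_ge y 0 with hy | hy
    · rw [nuL_zero t hy.le hC]
      refine measure_mono_null inter_subset_left ?_
      refine measure_mono_null (fun ω h => ?_) (ae_iff.1 h0)
      exact not_le.2 (lt_of_le_of_lt h hy)
    · let yn : ℕ → ℝ := fun n => y + 1 / ((n : ℝ) + 1)
      have hyn : ∀ n, y < yn n := fun n => by simp only [yn]; linarith [hε n]
      have hyn0 : ∀ n, 0 < yn n := fun n => lt_of_le_of_lt hy (hyn n)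
      have han : Antitone yn := by
        intro a b hab
        simp only [yn]
        gcongr
      have hyl : Tendsto yn atTop (𝓝 y) := by
        have h5 : Tendsto (fun n : ℕ => y + 1 / ((n : ℝ) + 1)) atTop (𝓝 (y + 0)) :=
            tendsto_const_nhds.add tendsto_one_div_add_atTop_nhds_zero_nat
        rwa [add_zero] at h5
      have l1 : Tendsto (fun n => nuL t (Iic (yn n) ×ˢ C)) atTop (𝓝 (nuL t (Iic y ×ˢ C))) := by
        have e : Iic y ×ˢ C = ⋂ n, Iic (yn n) ×ˢ C := by
          ext p
          simp only [mem_prod, mem_Iic, mem_iInter]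
          constructor
          · intro h n
            exact ⟨h.1.trans (hyn n).le, h.2⟩
          · intro h
            exact ⟨ge_of_tendsto' hyl fun n => (h n).1, (h 0).2⟩
        rw [e]
        refine tendsto_measure_iInter_atTop (fun n => (measurableSet_Iic.prod hC).nullMeasurableSet) ?_ ?_
        · intro a b hab
          exact prod_mono (Iic_subset_Iic.2 (han hab)) subset_rfl
        · exact ⟨0, by rw [← h2 _ (hyn0 0) C hC]; exact measure_ne_top _ _⟩
      have l2 : Tendsto (fun n => P ({ω | Y ω ≤ yn n} ∩ Z ⁻¹' C)) atTop
          (𝓝 (P ({ω | Y ω ≤ y} ∩ Z ⁻¹' C))) := by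
        have e : {ω | Y ω ≤ y} ∩ Z ⁻¹' C = ⋂ n, {ω | Y ω ≤ yn n} ∩ Z ⁻¹' C := by
          ext ω
          simp only [mem_inter_iff, mem_ofPred_eq, mem_iInter]
          constructor
          · intro h n
            exact ⟨h.1.trans (hyn n).le, h.2⟩
          · intro h
            exact ⟨ge_of_tendsto' hyl fun n => (h n).1, (h 0).2⟩
        rw [e]
        refine tendsto_measure_iInter_atTop (fun n => (hnull _).inter (hZ hC).nullMeasurableSet) ?_ ?_
        · intro a b hab ω h
          exact ⟨le_trans h.1 (han hab), h.2⟩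
        · exact ⟨0, measure_ne_top _ _⟩
      apply le_antisymm
      · refine ge_of_tendsto' l1 fun n => ?_
        rw [← h2 _ (hyn0 n) C hC]
        refine measure_mono_ae ?_
        filter_upwards [h1 _ (hyn0 n)] with ω h h'
        exact ⟨h.1 (lt_of_le_of_lt h'.1 (hyn n)), h'.2⟩
      · refine le_of_tendsto_of_tendsto' l1 l2 fun n => ?_
        rw [← h2 _ (hyn0 n) C hC]
        refine measure_mono_ae ?_
        filter_upwards [h1 _ (hyn0 n)] with ω h h'
        exact ⟨h.2 h'.1, h'.2⟩
  have hYZ : AEMeasurable (fun ω => (Y ω, Z ω)) P := hY.prodMk hZ.aemeasurable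
  have := Measure.isProbabilityMeasure_map hYZ
  refine Measure.ext_prod fun {A C} hA hC => ?_
  have e1 : ((P.map (fun ω => (Y ω, Z ω))).restrict (univ ×ˢ C)).map Prod.fst =
      ((nuL t).restrict (univ ×ˢ C)).map Prod.fst := by
    refine Measure.ext_of_Iic _ _ fun y => ?_
    rw [Measure.map_apply measurable_fst measurableSet_Iic,
      Measure.map_apply measurable_fst measurableSet_Iic,
      Measure.restrict_apply (measurable_fst measurableSet_Iic),
      Measure.restrict_apply (measurable_fst measurableSet_Iic)]
    have e2 : (Prod.fst ⁻¹' Iic y ∩ univ ×ˢ C : Set (ℝ × ℝ)) = Iic y ×ˢ C := by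
      ext p; simp
    rw [e2, ← key y C hC, Measure.map_apply_of_aemeasurable hYZ (measurableSet_Iic.prod hC)]
    rfl
  have e3 := congrArg (fun μ : Measure ℝ => μ A) e1
  rw [Measure.map_apply measurable_fst hA, Measure.map_apply measurable_fst hA,
      Measure.restrict_apply (measurable_fst hA), Measure.restrict_apply (measurable_fst hA)] at e3
  have e2 : (Prod.fst ⁻¹' A ∩ univ ×ˢ C : Set (ℝ × ℝ)) = A ×ˢ C := by
    ext p; simp
  rwa [e2] at e3

lemma first_part (P : Measure Ω) [IsProbabilityMeasure P] (B : ℝ → Ω → ℝ)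
    (hB : IsBrownianMotion P B) (t : ℝ≥0) (ht : 0 < t) :
    P.map (fun ω => ((Kproc B t ω - B t ω, Xproc B t ω) : ℝ × ℝ))
      = (volume : Measure (ℝ × ℝ)).withDensity
          (fun p => ENNReal.ofReal (jointDensKBX t p.1 p.2)) := by
  let W : ℝ≥0 → Ω → ℝ := fun s => B s
  have hW : IsPreBrownianReal W P := bm_pre hB
  have hm : ∀ s, Measurable (W s) := fun s => hB.measurable s
  have hc : ∀ᵐ ω ∂P, Continuous fun s => W s ω := by
    filter_upwards [hB.cont] with ω h
    exact h.comp_continuous (f := fun s : ℝ≥0 => (s : ℝ)) (by fun_prop) (fun s => s.2)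
  have main : ∀ y, 0 < y → ∀ᵐ ω ∂P, B t ω ≤ Kproc B t ω ∧
      (Kproc B t ω < B t ω + y → ω ∈ evE W t y) ∧ (ω ∈ evE W t y → Kproc B t ω ≤ B t ω + y) := by
    intro y hy
    filter_upwards [hB.cont, ae_lin_bdd (hW.shift t) (futProc_meas hm t) (futProc_cont hc t) hy,
      ae_lin_bdd (pastProc_pre hW ht) (pastProc_meas hm t) (pastProc_cont hc ht) hy] with ω h b1 b2
    refine maj_path (f := fun u => B u ω) h ht hy (u := fun s => futProc W t s ω)
      (v := fun s => pastProc W t s ω) ?_ ?_ b1 b2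
    · intro s
      simp [futProc, W]
    · intro s
      rfl
  obtain ⟨hY, hlaw⟩ := law_of_sandwich (P := P) (Y := fun ω => Kproc B t ω - B t ω) (Z := W t)
    (hm t) (t := t) (E := evE W t) (evE_meas hm t)
    (by filter_upwards [main 1 one_pos] with ω h using sub_nonneg.2 h.1)
    (by
      intro y hy
      filter_upwards [main y hy] with ω h
      exact ⟨fun h' => h.2.1 (by linarith), fun h' => by linarith [h.2.2 h']⟩)
    (fun y hy C hC => evE_law hW hm hc ht hy hC)
  rw [← nuL_map, ← hlaw, AEMeasurable.map_map_of_aemeasurable shear_pres.measurable.aemeasurable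
    (hY.prodMk (hm t).aemeasurable)]
  congr 1
  ext1 ω
  simp only [Function.comp, Xproc, W]
  congr 1
  ring

lemma second_part (t : ℝ) (z : ℝ) (hz : 0 < z) (y : ℝ) :
      (if 0 < y ∧ y < z then 6 * y * (z - y) / z ^ 3 else 0)
          * (∫ u : ℝ, jointDensKBX t u z)
        = jointDensKBX t y z := by
  have h1 : ∫ u : ℝ, jointDensKBX t u z =
      4 * z * t ^ (-(5 : ℝ) / 2) * stdGaussianPDF (z / Real.sqrt t) * (z ^ 3 / 6) := by
    have h2 : (fun u => jointDensKBX t u z) = (Ioo 0 z).indicator (fun u =>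
        4 * z * t ^ (-(5 : ℝ) / 2) * stdGaussianPDF (z / Real.sqrt t) * (u * (z - u))) := by
      ext u
      by_cases h : u ∈ Ioo 0 z
      · rw [indicator_of_mem h, jointDensKBX, if_pos ⟨h.1, h.2⟩]
        ring
      · rw [indicator_of_notMem h, jointDensKBX, if_neg]
        exact fun h' => h ⟨h'.1, h'.2⟩
    rw [h2, integral_indicator measurableSet_Ioo, integral_const_mul]
    congr 1
    rw [← integral_Ioc_eq_integral_Ioo, ← intervalIntegral.integral_of_le hz.le,
      intervalIntegral.integral_eq_sub_of_hasDerivAt (f := fun u => z * u ^ 2 / 2 - u ^ 3 / 3)]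
    · field_simp
      ring
    · intro x _
      have := (((hasDerivAt_pow 2 x).const_mul z).div_const 2).sub ((hasDerivAt_pow 3 x).div_const 3)
      convert! this using 1
      simp
      ring
    · exact (by fun_prop : Continuous fun u : ℝ => u * (z - u)).intervalIntegrable _ _
  rw [h1, jointDensKBX]
  split_ifs
  · field_simp
  · simp

end fin


/-- For every `t > 0`, the pair `(K(t) - B(t), X(t))` has joint density
`jointDensKBX t` on `ℝ²`; in particular the conditional density of `K(t) - B(t)` given
`X(t) = z` is `y ↦ 6y(z - y)/z³` on `(0, z)`, independently of `t`. -/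
theorem joint_density_KB_X {Ω : Type*} [MeasurableSpace Ω]
    (P : Measure Ω) [IsProbabilityMeasure P] (B : ℝ → Ω → ℝ)
    (hB : IsBrownianMotion P B) (t : ℝ) (ht : 0 < t) :
    P.map (fun ω => ((Kproc B t ω - B t ω, Xproc B t ω) : ℝ × ℝ))
      = (volume : Measure (ℝ × ℝ)).withDensity
          (fun p => ENNReal.ofReal (jointDensKBX t p.1 p.2)) ∧
    (∀ z : ℝ, 0 < z → ∀ y : ℝ,
      (if 0 < y ∧ y < z then 6 * y * (z - y) / z ^ 3 else 0)
          * (∫ u : ℝ, jointDensKBX t u z)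
        = jointDensKBX t y z) := by
  obtain ⟨s, rfl⟩ : ∃ s : NNReal, (s : ℝ) = t := ⟨⟨t, ht.le⟩, rfl⟩
  exact ⟨first_part P B hB s (by exact_mod_cast ht), fun z hz y => second_part s z hz y⟩
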